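/- Every connected, noncompact, second-countable topological surface without boundary admits a compact exhaustion by connected compact subsurfaces: there exist compact connected subsurfaces-with-boundary M₁ ⊆ M₂ ⊆ ⋯ with M_n ⊆ int(M_{n+1}) for all n and ⋃_n M_n = M. -/

import Mathlib

section
open Set Filter Metric Topology

namespace OSCE

lemma hurwitz_local {ι : Type*} {a : ℂ} {R : ℝ} (hR : 0 < R) {l : Filter ι} [l.NeBot]
    {g : ι → ℂ → ℂ} {G : ℂ → ℂ} (hd : ∀ n, DifferentiableOn ℂ (g n) (ball a R))
    (h0 : ∀ n, ∀ z ∈ ball a R, g n z ≠ 0)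
    (hG : TendstoLocallyUniformlyOn g G l (ball a R)) (hGa : G a = 0) :
    ∀ᶠ z in 𝓝 a, G z = 0 := by
  have hGd : DifferentiableOn ℂ G (ball a R) :=
    hG.differentiableOn (Eventually.of_forall hd) isOpen_ball
  have hGan : AnalyticAt ℂ G a := hGd.analyticAt (ball_mem_nhds a hR)
  rcases hGan.eventually_eq_zero_or_eventually_ne_zero with h | h
  · exact h
  exfalso
  rw [eventually_nhdsWithin_iff, Metric.eventually_nhds_iff] at h
  obtain ⟨ε, hε, h⟩ := h
  set r := min (ε / 2) (R / 2) with hr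
  have hr0 : 0 < r := by positivity
  have hrε : r < ε := (min_le_left _ _).trans_lt (by linarith)
  have hrR : r < R := (min_le_right _ _).trans_lt (by linarith)
  have hsub : closedBall a r ⊆ ball a R := closedBall_subset_ball hrR
  have hne : ∀ z ∈ sphere a r, G z ≠ 0 := by
    intro z hz
    refine h ?_ ?_
    · rw [mem_sphere] at hz; rw [hz]; exact hrε
    · rintro rfl
      simp at hz; linarith
  obtain ⟨z0, hz0, hmin⟩ := (isCompact_sphere a r).exists_isMinOn
    (NormedSpace.sphere_nonempty.2 hr0.le)
    ((hGd.continuousOn.mono (sphere_subset_closedBall.trans hsub)).norm)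
  set m := ‖G z0‖ with hm
  have hm0 : 0 < m := norm_pos_iff.2 (hne z0 hz0)
  have hU : TendstoUniformlyOn g G l (closedBall a r) :=
    (tendstoLocallyUniformlyOn_iff_forall_isCompact isOpen_ball).1 hG _ hsub
      (isCompact_closedBall a r)
  rw [Metric.tendstoUniformlyOn_iff] at hU
  obtain ⟨n, hn⟩ := (hU (m / 4) (by positivity)).exists
  have hga : ‖g n a‖ < m / 4 := by
    have := hn a (mem_closedBall_self hr0.le)
    rwa [hGa, dist_zero_left] at this
  have hsph : ∀ z ∈ sphere a r, m / 2 ≤ ‖g n z‖ := by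
    intro z hz
    have h1 := hn z (sphere_subset_closedBall hz)
    have h2 : m ≤ ‖G z‖ := hmin hz
    rw [dist_eq_norm] at h1
    have := norm_sub_norm_le (G z) (g n z)
    linarith
  have hdc : DiffContOnCl ℂ (fun z => (g n z)⁻¹) (ball a r) := by
    apply DifferentiableOn.diffContOnCl
    rw [closure_ball a hr0.ne']
    exact ((hd n).mono hsub).inv (fun z hz => h0 n z (hsub hz))
  have key := Complex.norm_le_of_forall_mem_frontier_norm_le (C := 2 / m) isBounded_ball hdc
    (by
      intro z hz
      rw [frontier_ball a hr0.ne'] at hz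
      rw [norm_inv, inv_le_comm₀ (lt_of_lt_of_le (by positivity) (hsph z hz)) (by positivity)]
      rw [inv_div]; exact hsph z hz) (subset_closure (mem_ball_self hr0))
  have hga0 : 0 < ‖g n a‖ := norm_pos_iff.2 (h0 n a (mem_ball_self hR))
  rw [norm_inv, inv_le_comm₀ hga0 (by positivity), inv_div] at key
  linarith

lemma normal_limit {U : Set ℂ} (hU : IsOpen U) {f : ℕ → ℂ → ℂ}
    (hd : ∀ n, DifferentiableOn ℂ (f n) U) (hm : ∀ n, MapsTo (f n) U (ball 0 1)) :
    ∃ F : ℂ → ℂ, TendstoLocallyUniformlyOn f F (hyperfilter ℕ : Filter ℕ) U := by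
  have hpt : ∀ z : ℂ, ∃ w : ℂ, z ∈ U → Tendsto (fun n => f n z) (hyperfilter ℕ : Filter ℕ) (𝓝 w) := by
    intro z
    by_cases hz : z ∈ U
    · obtain ⟨w, -, hw⟩ := (isCompact_closedBall (0:ℂ) 1).ultrafilter_le_nhds
        ((hyperfilter ℕ).map (fun n => f n z)) (by
          rw [le_principal_iff, Ultrafilter.coe_map]
          exact Filter.mem_map.2 <| Eventually.of_forall (fun n => ball_subset_closedBall (hm n hz)))
      exact ⟨w, fun _ => hw⟩
    · exact ⟨0, fun h => absurd h hz⟩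
  choose F hF using hpt
  refine ⟨F, ?_⟩
  have hlip : ∀ x R, 0 < R → ball x R ⊆ U → ∀ n, ∀ y ∈ ball x R,
      dist (f n y) (f n x) ≤ 2 / R * dist y x := by
    intro x R hR hsub n y hy
    refine Complex.dist_le_div_mul_dist_of_mapsTo_ball ((hd n).mono hsub) ?_ hy
    intro z hz
    have h1 := hm n (hsub hz)
    have h2 := hm n (hsub (mem_ball_self hR))
    rw [mem_closedBall]
    rw [mem_ball] at h1 h2
    have := dist_triangle_right (f n z) (f n x) 0
    linarith
  rw [Metric.tendstoLocallyUniformlyOn_iff]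
  intro ε hε x hx
  obtain ⟨R, hR, hsub⟩ := Metric.isOpen_iff.1 hU x hx
  have hlipF : ∀ y ∈ ball x R, dist (F y) (F x) ≤ 2 / R * dist y x := by
    intro y hy
    exact le_of_tendsto ((hF y (hsub hy)).dist (hF x hx))
      (Eventually.of_forall fun n => hlip x R hR hsub n y hy)
  set δ := min R (ε * R / 8) with hδ
  have hδ0 : 0 < δ := by positivity
  refine ⟨ball x δ, mem_nhdsWithin_of_mem_nhds (ball_mem_nhds x hδ0), ?_⟩
  filter_upwards [(Metric.tendsto_nhds.1 (hF x hx)) (ε / 4) (by positivity)] with n hn y hy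
  have hyR : y ∈ ball x R := ball_subset_ball (min_le_left _ _) hy
  have hy2 : 2 / R * dist y x ≤ ε / 4 := by
    have : dist y x ≤ ε * R / 8 := (mem_ball.1 hy).le.trans (min_le_right _ _)
    calc 2 / R * dist y x ≤ 2 / R * (ε * R / 8) := by gcongr
      _ = ε / 4 := by field_simp; norm_num
  have h1 := hlip x R hR hsub n y hyR
  have h2 := hlipF y hyR
  have h3 := dist_triangle4 (F y) (F x) (f n x) (f n y)
  rw [dist_comm (F x), dist_comm (f n x) (f n y)] at h3
  linarith

end OSCE
end

section
open Set Filter Metric Topology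

namespace OSCE

noncomputable def moeb (a z : ℂ) : ℂ := (z - a) / (1 - (starRingEnd ℂ) a * z)

lemma moeb_den {a z : ℂ} (ha : ‖a‖ < 1) (hz : ‖z‖ < 1) : 1 - (starRingEnd ℂ) a * z ≠ 0 := by
  intro h
  have h1 : (starRingEnd ℂ) a * z = 1 := (sub_eq_zero.1 h).symm
  have h2 := congrArg norm h1
  rw [norm_mul, RCLike.norm_conj, norm_one] at h2
  nlinarith [norm_nonneg a, norm_nonneg z]

lemma moeb_self (a : ℂ) : moeb a a = 0 := by simp [moeb]

lemma moeb_hasDerivAt {a z : ℂ} (ha : ‖a‖ < 1) (hz : ‖z‖ < 1) :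
    HasDerivAt (moeb a) ((1 - (starRingEnd ℂ) a * a) / (1 - (starRingEnd ℂ) a * z) ^ 2) z := by
  have h1 : HasDerivAt (fun z : ℂ => z - a) 1 z := (hasDerivAt_id z).sub_const a
  have h2 : HasDerivAt (fun z : ℂ => 1 - (starRingEnd ℂ) a * z) (-((starRingEnd ℂ) a * 1)) z :=
    ((hasDerivAt_id z).const_mul _).const_sub 1
  have := h1.fun_div h2 (moeb_den ha hz)
  refine this.congr_deriv ?_
  congr 1
  ring

lemma moeb_norm_lt {a z : ℂ} (ha : ‖a‖ < 1) (hz : ‖z‖ < 1) : ‖moeb a z‖ < 1 := by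
  have hd := moeb_den ha hz
  rw [moeb, norm_div, div_lt_one (norm_pos_iff.2 hd)]
  have : ‖z - a‖ ^ 2 < ‖1 - (starRingEnd ℂ) a * z‖ ^ 2 := by
    have h1 : ‖a‖ ^ 2 < 1 := by nlinarith [norm_nonneg a]
    have h2 : ‖z‖ ^ 2 < 1 := by nlinarith [norm_nonneg z]
    rw [← Complex.normSq_eq_norm_sq] at *
    rw [← Complex.normSq_eq_norm_sq] at *
    simp only [Complex.normSq_apply, Complex.sub_re, Complex.sub_im, Complex.mul_re, Complex.mul_im,
      Complex.one_re, Complex.one_im, Complex.conj_re, Complex.conj_im] at *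
    nlinarith [mul_pos (sub_pos.2 h1) (sub_pos.2 h2)]
  exact lt_of_pow_lt_pow_left₀ 2 (norm_nonneg _) this

lemma one_sub_conj_ne {a : ℂ} (ha : ‖a‖ < 1) : 1 - (starRingEnd ℂ) a * a ≠ 0 := moeb_den ha ha

lemma moeb_inj {a z w : ℂ} (ha : ‖a‖ < 1) (hz : ‖z‖ < 1) (hw : ‖w‖ < 1)
    (h : moeb a z = moeb a w) : z = w := by
  rw [moeb, moeb, div_eq_div_iff (moeb_den ha hz) (moeb_den ha hw)] at h
  have : (z - w) * (1 - (starRingEnd ℂ) a * a) = 0 := by linear_combination h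
  rcases mul_eq_zero.1 this with h | h
  · exact sub_eq_zero.1 h
  · exact absurd h (one_sub_conj_ne ha)

structure Fam (U : Set ℂ) (f : ℂ → ℂ) : Prop where
  diff : DifferentiableOn ℂ f U
  inj : InjOn f U
  maps : ∀ z ∈ U, ‖f z‖ < 1
  der : ∀ z ∈ U, deriv f z ≠ 0

lemma Fam.hasDerivAt {U : Set ℂ} (hU : IsOpen U) {f : ℂ → ℂ} (h : Fam U f) {z : ℂ} (hz : z ∈ U) :
    HasDerivAt f (deriv f z) z :=
  (h.diff.differentiableAt (hU.mem_nhds hz)).hasDerivAt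

lemma Fam.moeb_deriv {U : Set ℂ} (hU : IsOpen U) {f : ℂ → ℂ} (h : Fam U f) {a : ℂ} (ha : ‖a‖ < 1)
    {z : ℂ} (hz : z ∈ U) : HasDerivAt (fun z => moeb a (f z))
      ((1 - (starRingEnd ℂ) a * a) / (1 - (starRingEnd ℂ) a * f z) ^ 2 * deriv f z) z :=
  (moeb_hasDerivAt ha (h.maps z hz)).comp z (h.hasDerivAt hU hz)

lemma Fam.moeb {U : Set ℂ} (hU : IsOpen U) {f : ℂ → ℂ} (h : Fam U f) {a : ℂ} (ha : ‖a‖ < 1) :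
    Fam U (fun z => moeb a (f z)) where
  diff := fun z hz => (h.moeb_deriv hU ha hz).differentiableAt.differentiableWithinAt
  inj := fun z hz w hw e => h.inj hz hw (moeb_inj ha (h.maps z hz) (h.maps w hw) e)
  maps := fun z hz => moeb_norm_lt ha (h.maps z hz)
  der := fun z hz => by
    rw [(h.moeb_deriv hU ha hz).deriv]
    exact mul_ne_zero (div_ne_zero (one_sub_conj_ne ha) (pow_ne_zero _ (moeb_den ha (h.maps z hz))))
      (h.der z hz)

lemma Fam.sqrt {U : Set ℂ} (hU : IsOpen U) (hUc : IsSimplyConnected U) {f : ℂ → ℂ} (h : Fam U f)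
    (h0 : ∀ z ∈ U, f z ≠ 0) : ∃ s : ℂ → ℂ, Fam U s ∧ (∀ z, s z ^ 2 = f z) ∧
      ∀ z ∈ U, deriv s z = deriv f z / (2 * s z) := by
  obtain ⟨s, hsc, hs⟩ := Complex.exists_continuousOn_pow_eq hUc hU h.diff.continuousOn
    (by rintro ⟨z, hz, e⟩; exact h0 z hz e) two_ne_zero
  have hs0 : ∀ z ∈ U, s z ≠ 0 := by
    intro z hz e
    apply h0 z hz
    rw [← hs z, e]; simp
  have hder : ∀ z ∈ U, HasDerivAt s (deriv f z / (2 * s z)) z := by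
    intro z hz
    have hca : ContinuousAt s z := hsc.continuousAt (hU.mem_nhds hz)
    have h2 : (2 : ℂ) * s z ≠ 0 := mul_ne_zero two_ne_zero (hs0 z hz)
    -- slope argument
    rw [hasDerivAt_iff_tendsto_slope]
    have hf := hasDerivAt_iff_tendsto_slope.1 (h.hasDerivAt hU hz)
    have hadd : Tendsto (fun w => s w + s z) (𝓝[≠] z) (𝓝 (2 * s z)) := by
      have : Tendsto (fun w => s w + s z) (𝓝 z) (𝓝 (s z + s z)) := hca.add tendsto_const_nhds
      rw [two_mul]; exact this.mono_left nhdsWithin_le_nhds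
    refine (hf.div hadd h2).congr' ?_
    filter_upwards [hadd.eventually_ne h2] with w hw
    simp only [slope, vsub_eq_sub, smul_eq_mul, Pi.div_apply]
    rw [← hs w, ← hs z, div_eq_iff hw]
    ring
  refine ⟨s, ⟨fun z hz => (hder z hz).differentiableAt.differentiableWithinAt, ?_, ?_, ?_⟩, hs,
    fun z hz => (hder z hz).deriv⟩
  · intro z hz w hw e
    apply h.inj hz hw
    rw [← hs z, ← hs w, e]
  · intro z hz
    have := h.maps z hz
    rw [← hs z, norm_pow] at this
    exact (sq_lt_one_iff₀ (norm_nonneg _)).1 this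
  · intro z hz
    rw [(hder z hz).deriv]
    exact div_ne_zero (h.der z hz) (mul_ne_zero two_ne_zero (hs0 z hz))

lemma Fam.improve {U : Set ℂ} (hU : IsOpen U) (hUc : IsSimplyConnected U) {f : ℂ → ℂ} (h : Fam U f)
    {w : ℂ} (hw : w ∈ U) (hfw : f w = 0) {a : ℂ} (ha : ‖a‖ < 1) (haf : ∀ z ∈ U, f z ≠ a) :
    ∃ F : ℂ → ℂ, Fam U F ∧ F w = 0 ∧ ‖deriv f w‖ < ‖deriv F w‖ := by
  have hg := h.moeb hU ha
  obtain ⟨s, hs, hsq, hsd⟩ := hg.sqrt hU hUc (by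
    intro z hz e
    apply haf z hz
    exact moeb_inj ha (h.maps z hz) ha (e.trans (moeb_self a).symm))
  have hb : ‖s w‖ < 1 := hs.maps w hw
  refine ⟨_, hs.moeb hU hb, moeb_self _, ?_⟩
  rw [(hs.moeb_deriv hU hb hw).deriv, hsd w hw, (h.moeb_deriv hU ha hw).deriv, hfw]
  have e : s w ^ 2 = - a := by rw [hsq, hfw, OSCE.moeb]; simp
  have hc := haf w hw
  rw [hfw] at hc
  have hb0 : s w ≠ 0 := by
    intro h0; rw [h0] at e; apply hc; exact (by simpa using e : a = 0).symm
  set b := s w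
  have ea : a = - b ^ 2 := by rw [e]; simp
  have hbp : 0 < ‖b‖ := norm_pos_iff.2 hb0
  have hone := one_sub_conj_ne hb
  have key : (1 - (starRingEnd ℂ) b * b) / (1 - (starRingEnd ℂ) b * b) ^ 2 *
      ((1 - (starRingEnd ℂ) a * a) / (1 - (starRingEnd ℂ) a * 0) ^ 2 * deriv f w / (2 * b))
      = (1 + (starRingEnd ℂ) b * b) / (2 * b) * deriv f w := by
    rw [ea]
    simp only [map_neg, map_pow, mul_zero, sub_zero, one_pow, div_one]
    field_simp
    ring
  rw [key, norm_mul, norm_div]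
  have hd : 0 < ‖deriv f w‖ := norm_pos_iff.2 (h.der w hw)
  have : ‖1 + (starRingEnd ℂ) b * b‖ = 1 + ‖b‖ ^ 2 := by
    rw [mul_comm, Complex.mul_conj, Complex.normSq_eq_norm_sq]
    rw [← Complex.ofReal_one, ← Complex.ofReal_add, Complex.norm_real, Real.norm_of_nonneg]
    positivity
  rw [this, norm_mul, Complex.norm_ofNat]
  have : 1 < (1 + ‖b‖ ^ 2) / (2 * ‖b‖) := by
    rw [lt_div_iff₀ (by positivity)]
    nlinarith [sq_pos_of_pos (sub_pos.2 hb)]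
  nlinarith

lemma rmt {U : Set ℂ} (hU : IsOpen U) (hUc : IsSimplyConnected U) (hbd : Bornology.IsBounded U) :
    ∃ f : ℂ → ℂ, DifferentiableOn ℂ f U ∧ BijOn f U (ball 0 1) ∧ ∀ z ∈ U, deriv f z ≠ 0 := by
  obtain ⟨w, hw⟩ := hUc.nonempty
  have hconn : IsPreconnected U := hUc.isPathConnected.isConnected.isPreconnected
  obtain ⟨C, hC0, hC⟩ := hbd.exists_pos_norm_lt
  have hC0' : (C : ℂ)⁻¹ ≠ 0 := inv_ne_zero (by exact_mod_cast hC0.ne')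
  have hF₀ : Fam U (fun z => z * (C : ℂ)⁻¹) := by
    refine ⟨by fun_prop, fun z _ y _ e => mul_right_cancel₀ hC0' e, fun z hz => ?_, fun z hz => ?_⟩
    · rw [norm_mul, norm_inv, Complex.norm_real, Real.norm_of_nonneg hC0.le, ← div_eq_mul_inv,
        div_lt_one hC0]
      exact hC z hz
    · rw [((hasDerivAt_id' z).mul_const _).deriv]
      simpa using hC0'
  set S : Set ℝ := {t | ∃ f, Fam U f ∧ f w = 0 ∧ t = ‖deriv f w‖} with hS
  have hSne : S.Nonempty := ⟨_, _, hF₀.moeb hU (hF₀.maps w hw), moeb_self _, rfl⟩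
  obtain ⟨R, hR, hRsub⟩ := Metric.isOpen_iff.1 hU w hw
  have hSb : BddAbove S := by
    refine ⟨1 / R, ?_⟩
    rintro t ⟨f, hf, hfw, rfl⟩
    refine Complex.norm_deriv_le_div_of_mapsTo_ball (hf.diff.mono hRsub) ?_ hR
    intro z hz
    rw [hfw]
    simpa using (hf.maps z (hRsub hz)).le
  obtain ⟨t, -, htend, htS⟩ := exists_seq_tendsto_sSup hSne hSb
  choose f hf hfw hft using htS
  obtain ⟨F, hF⟩ := normal_limit hU (fun n => (hf n).diff)
    (fun n z hz => by simpa using (hf n).maps z hz)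
  have hFd : DifferentiableOn ℂ F U := hF.differentiableOn (Eventually.of_forall fun n => (hf n).diff) hU
  have hF' : TendstoLocallyUniformlyOn (fun n => deriv (f n)) (deriv F) (hyperfilter ℕ : Filter ℕ) U :=
    hF.deriv (Eventually.of_forall fun n => (hf n).diff) hU
  have hderw : ‖deriv F w‖ = sSup S := by
    have h1 := (hF'.tendsto_at hw).norm
    have h2 : Tendsto t (hyperfilter ℕ : Filter ℕ) (𝓝 (sSup S)) :=
      htend.mono_left (by rw [← Nat.cofinite_eq_atTop]; exact hyperfilter_le_cofinite)
    refine tendsto_nhds_unique h1 (h2.congr hft)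
  have hpos : 0 < ‖deriv F w‖ := by
    rw [hderw]
    obtain ⟨x, hx⟩ := hSne
    refine lt_of_lt_of_le ?_ (le_csSup hSb hx)
    obtain ⟨g, hg, -, rfl⟩ := hx
    exact norm_pos_iff.2 (hg.der w hw)
  have hFan : AnalyticOnNhd ℂ F U := hFd.analyticOnNhd hU
  have hFw : F w = 0 := by
    refine tendsto_nhds_unique (hF.tendsto_at hw) ?_
    simp only [hfw]; exact tendsto_const_nhds
  -- not constant
  have hnc : ∀ z ∈ U, ∀ c, ¬ ∀ᶠ y in 𝓝 z, F y = c := by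
    intro z hz c hc
    have := hFan.eqOn_of_preconnected_of_eventuallyEq (g := fun _ => c) analyticOnNhd_const hconn hz hc
    have h2 : F =ᶠ[𝓝 w] fun _ => c := this.eventuallyEq_of_mem (hU.mem_nhds hw)
    have := h2.deriv_eq
    rw [this] at hpos
    simp at hpos
  have hFder : ∀ z ∈ U, deriv F z ≠ 0 := by
    intro z hz hz0
    obtain ⟨r, hr, hrsub⟩ := Metric.isOpen_iff.1 hU z hz
    have := hurwitz_local hr (fun n => ((hf n).diff.deriv hU).mono hrsub)
      (fun n y hy => (hf n).der y (hrsub hy)) (hF'.mono hrsub) hz0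
    have h3 := (hFan.deriv).eqOn_of_preconnected_of_eventuallyEq (g := fun _ => (0:ℂ))
      analyticOnNhd_const hconn hz this
    have := h3 hw
    rw [this] at hpos; simp at hpos
  have hFinj : InjOn F U := by
    intro a ha b hb hab
    by_contra hne
    have hUb : U \ {b} ∈ 𝓝 a := (hU.sdiff isClosed_singleton).mem_nhds ⟨ha, hne⟩
    obtain ⟨r, hr, hrsub⟩ := Metric.mem_nhds_iff.1 hUb
    have hr' : ball a r ⊆ U := hrsub.trans sdiff_subset
    have hT : TendstoLocallyUniformlyOn (fun n z => f n z - f n b) (fun z => F z - F b)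
        (hyperfilter ℕ : Filter ℕ) (ball a r) := by
      have hb' : TendstoLocallyUniformlyOn (fun n (_ : ℂ) => f n b) (fun _ => F b)
          (hyperfilter ℕ : Filter ℕ) (ball a r) :=
        ((hF.tendsto_at hb).tendstoUniformlyOn_const _).tendstoLocallyUniformlyOn
      exact (hF.mono hr').sub hb'
    have := hurwitz_local hr (fun n => ((hf n).diff.mono hr').sub_const _)
      (fun n y hy e => (hrsub hy).2 ((hf n).inj (hr' hy) hb (sub_eq_zero.1 e))) hT
      (by simp [hab])
    exact hnc a ha (F b) (this.mono fun y hy => sub_eq_zero.1 hy)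
  have hFle : ∀ z ∈ U, ‖F z‖ ≤ 1 := fun z hz =>
    le_of_tendsto (hF.tendsto_at hz).norm (Eventually.of_forall fun n => ((hf n).maps z hz).le)
  have hFlt : ∀ z ∈ U, ‖F z‖ < 1 := by
    intro z hz
    refine lt_of_le_of_ne (hFle z hz) ?_
    intro e
    have hmax : IsLocalMax (norm ∘ F) z := by
      filter_upwards [hU.mem_nhds hz] with y hy
      simp only [Function.comp, e]; exact hFle y hy
    have := Complex.eventually_eq_of_isLocalMax_norm (f := F) (c := z)
      (by filter_upwards [hU.mem_nhds hz] with y hy; exact hFd.differentiableAt (hU.mem_nhds hy)) hmax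
    exact hnc z hz _ this
  have hFF : Fam U F := ⟨hFd, hFinj, hFlt, hFder⟩
  refine ⟨F, hFd, ⟨fun z hz => by simpa using hFlt z hz, hFinj, ?_⟩, hFder⟩
  intro a ha
  by_contra hcon
  obtain ⟨G, hG, hGw, hlt⟩ := hFF.improve hU hUc hw hFw (a := a) (by simpa using ha)
    (fun z hz e => hcon ⟨z, hz, e⟩)
  have := le_csSup hSb (show ‖deriv G w‖ ∈ S from ⟨G, hG, hGw, rfl⟩)
  rw [hderw] at hlt
  linarith

end OSCE
end

section
open Set Filter Metric Topology MeasureTheory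

namespace OSCE

lemma det_complex (L : ℂ →L[ℝ] ℂ) :
    L.det = (L 1).re * (L Complex.I).im - (L Complex.I).re * (L 1).im := by
  rw [ContinuousLinearMap.det, ← LinearMap.det_toMatrix Complex.basisOneI, Matrix.det_fin_two]
  simp [LinearMap.toMatrix_apply]

lemma det_restrict (a : ℂ) :
    ((ContinuousLinearMap.toSpanSingleton ℂ a).restrictScalars ℝ).det = ‖a‖ ^ 2 := by
  rw [det_complex, ← Complex.normSq_eq_norm_sq, Complex.normSq_apply]
  simp

lemma lintegral_inv_top {R : ℝ} (hR : 0 < R) :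
    ∫⁻ x in Ioo (0:ℝ) R, ENNReal.ofReal x⁻¹ = ⊤ := by
  by_contra h
  have h1 : IntegrableOn (fun x : ℝ => x⁻¹) (Ioo 0 R) := by
    refine ⟨measurable_inv.aestronglyMeasurable, ?_⟩
    rw [hasFiniteIntegral_iff_norm]
    refine lt_of_le_of_lt (le_of_eq ?_) (lt_top_iff_ne_top.2 h)
    refine setLIntegral_congr_fun measurableSet_Ioo (fun x hx => ?_)
    rw [Real.norm_of_nonneg (inv_nonneg.2 hx.1.le)]
  have h2 : IntervalIntegrable (fun x : ℝ => x⁻¹) volume 0 R := by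
    rw [intervalIntegrable_iff_integrableOn_Ioo_of_le hR.le]; exact h1
  rw [intervalIntegrable_inv_iff] at h2
  rcases h2 with h2 | h2
  · exact hR.ne h2
  · exact h2 left_mem_uIcc

lemma length_area {Ω : Set ℂ} (hΩ : IsOpen Ω) {f : ℂ → ℂ} (hf : DifferentiableOn ℂ f Ω)
    (hi : InjOn f Ω) (hb : Bornology.IsBounded (f '' Ω)) (c : ℂ) {d R : ℝ} (hd : 0 < d)
    (hR : 0 < R) : ∃ ρ ∈ Ioo 0 R,
      volume (Complex.re '' (f '' (Ω ∩ sphere c ρ))) < ENNReal.ofReal d := by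
  by_contra! hcon
  have hder : ∀ z ∈ Ω, HasDerivAt f (deriv f z) z := fun z hz =>
    (hf.differentiableAt (hΩ.mem_nhds hz)).hasDerivAt
  set G : ℂ → ENNReal := Ω.indicator (fun z => ENNReal.ofReal (‖deriv f z‖ ^ 2)) with hG
  have hGm : Measurable G := by
    refine Measurable.indicator ?_ hΩ.measurableSet
    exact ((measurable_deriv f).norm.pow_const 2).ennreal_ofReal
  have hA : ∫⁻ z, G z < ⊤ := by
    rw [hG, lintegral_indicator hΩ.measurableSet]
    have := lintegral_abs_det_fderiv_eq_addHaar_image volume (f := f)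
      (f' := fun z => (ContinuousLinearMap.toSpanSingleton ℂ (deriv f z)).restrictScalars ℝ)
      hΩ.measurableSet
      (fun z hz => ((hder z hz).hasFDerivAt.restrictScalars ℝ).hasFDerivWithinAt) hi
    simp only [det_restrict, abs_pow, abs_norm] at this
    rw [this]
    exact hb.measure_lt_top
  have hA2 : ∫⁻ z, G (c + z) < ⊤ := by
    rw [lintegral_add_left_eq_self]; exact hA
  set P : ℝ → ℝ → ℂ := fun ρ θ => c + ρ * (Real.cos θ + Real.sin θ * Complex.I) with hP
  have hPcont : Continuous (fun p : ℝ × ℝ => P p.1 p.2) := by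
    simp only [hP]; fun_prop
  rw [← Complex.lintegral_comp_polarCoord_symm, polarCoord_target, Measure.volume_eq_prod,
    ← Measure.prod_restrict, lintegral_prod] at hA2
  swap
  · refine Measurable.aemeasurable ?_
    refine Measurable.smul (f := fun p : ℝ × ℝ => ENNReal.ofReal p.1) (by fun_prop) ?_
    refine hGm.comp (g := G) ?_
    have : (fun p => c + Complex.polarCoord.symm p) = fun p : ℝ × ℝ => P p.1 p.2 := by
      ext p; simp [hP]
    rw [this]; exact hPcont.measurable
  simp only [Complex.polarCoord_symm_apply] at hA2
  set J : ℝ → ENNReal := fun ρ => ∫⁻ θ in Ioo (-Real.pi) Real.pi, G (P ρ θ) with hJ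
  have hGP : ∀ ρ, Measurable (fun θ => G (P ρ θ)) := fun ρ =>
    hGm.comp (by simp only [hP]; fun_prop)
  set lam := d / (2 * Real.pi) with hlam
  have hpi := Real.pi_pos
  have hlam0 : 0 < lam := by positivity
  have key : ∀ ρ ∈ Ioo 0 R, ENNReal.ofReal d ≤
      ENNReal.ofReal (d / 2) + ENNReal.ofReal (ρ ^ 2 / (2 * lam)) * J ρ := by
    intro ρ hρ
    refine (hcon ρ hρ).trans ?_
    set T : Set ℝ := {θ | P ρ θ ∈ Ω} ∩ Ioo (-Real.pi) Real.pi with hT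
    have hPρ : Continuous (P ρ) := by simp only [hP]; fun_prop
    have hTm : MeasurableSet T :=
      ((hΩ.preimage hPρ).inter isOpen_Ioo).measurableSet
    set u : ℝ → ℝ := fun θ => (f (P ρ θ)).re with hu
    set P' : ℝ → ℂ := fun θ => ρ * (-Real.sin θ + Real.cos θ * Complex.I) with hP'
    have hPd : ∀ θ, HasDerivAt (P ρ) (P' θ) θ := by
      intro θ
      have h1 := (Real.hasDerivAt_cos θ).ofReal_comp
      have h2 := (Real.hasDerivAt_sin θ).ofReal_comp
      have := ((h1.add (h2.mul_const Complex.I)).const_mul (ρ:ℂ)).const_add c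
      refine this.congr_deriv ?_
      simp [hP']
    have hPn : ∀ θ, ‖P' θ‖ = ρ := by
      intro θ
      simp only [hP', norm_mul, Complex.norm_real, Real.norm_of_nonneg hρ.1.le]
      have : ‖(-(Real.sin θ : ℂ) + Real.cos θ * Complex.I)‖ = 1 := by
        rw [← Complex.ofReal_neg, Complex.norm_add_mul_I]
        simp
      rw [this, mul_one]
    have hud : ∀ θ ∈ T, HasDerivWithinAt u ((deriv f (P ρ θ) * P' θ).re) T θ := by
      intro θ hθ
      have h1 : HasDerivAt (fun t => f (P ρ t)) (deriv f (P ρ θ) * P' θ) θ :=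
        (hder _ hθ.1).comp θ (hPd θ)
      have h2 := (Complex.reCLM.hasFDerivAt.comp_hasDerivAt θ h1)
      exact h2.hasDerivWithinAt
    have hsub : Complex.re '' (f '' (Ω ∩ sphere c ρ)) ⊆ u '' T ∪ {u Real.pi} := by
      rintro _ ⟨_, ⟨z, ⟨hz, hzs⟩, rfl⟩, rfl⟩
      have hz2 : z = P ρ (Complex.arg (z - c)) := by
        have := Complex.norm_mul_cos_add_sin_mul_I (z - c)
        rw [mem_sphere, dist_eq_norm] at hzs
        rw [hzs] at this
        simp only [hP]
        push_cast
        rw [this]; ring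
      rcases (Complex.arg_le_pi (z - c)).lt_or_eq with h | h
      · left
        refine ⟨Complex.arg (z - c), ⟨?_, Complex.neg_pi_lt_arg _, h⟩, ?_⟩
        · change P ρ _ ∈ Ω
          rw [← hz2]; exact hz
        · simp only [hu]; rw [← hz2]
      · right
        rw [h] at hz2
        simp only [hu, ← hz2, mem_singleton_iff]
    calc volume (Complex.re '' (f '' (Ω ∩ sphere c ρ)))
        ≤ volume (u '' T) + volume {u Real.pi} := (measure_mono hsub).trans (measure_union_le _ _)
      _ = volume (u '' T) := by simp
      _ ≤ ∫⁻ θ in T, ENNReal.ofReal |(deriv f (P ρ θ) * P' θ).re| := by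
        have := addHaar_image_le_lintegral_abs_det_fderiv volume hTm
          (fun θ hθ => (hud θ hθ).hasFDerivWithinAt)
        simpa using this
      _ ≤ ∫⁻ θ in T, (ENNReal.ofReal (lam / 2) + ENNReal.ofReal (ρ ^ 2 / (2 * lam)) * G (P ρ θ)) := by
        refine setLIntegral_mono' hTm (fun θ hθ => ?_)
        rw [hG, indicator_of_mem (show P ρ θ ∈ Ω from hθ.1), ← ENNReal.ofReal_mul (by positivity), ← ENNReal.ofReal_add
          (by positivity) (by positivity)]
        apply ENNReal.ofReal_le_ofReal
        have h1 := Complex.abs_re_le_norm (deriv f (P ρ θ) * P' θ)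
        rw [norm_mul, hPn] at h1
        refine h1.trans ?_
        set q := ‖deriv f (P ρ θ)‖
        have : 0 ≤ (lam - ρ * q) ^ 2 / (2 * lam) := by positivity
        have e : (lam - ρ * q) ^ 2 / (2 * lam) = lam / 2 + ρ ^ 2 / (2 * lam) * q ^ 2 - q * ρ := by
          field_simp; ring
        linarith
      _ ≤ ∫⁻ θ in Ioo (-Real.pi) Real.pi,
          (ENNReal.ofReal (lam / 2) + ENNReal.ofReal (ρ ^ 2 / (2 * lam)) * G (P ρ θ)) :=
        lintegral_mono_set inter_subset_right
      _ = _ := by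
        rw [lintegral_add_left measurable_const, lintegral_const_mul _ (hGP ρ), setLIntegral_const,
          Real.volume_Ioo, ← ENNReal.ofReal_mul (by positivity)]
        congr 2
        rw [hlam]; field_simp; ring
  have key2 : ∀ ρ ∈ Ioo 0 R, ENNReal.ofReal (d * lam) * ENNReal.ofReal ρ⁻¹ ≤ ENNReal.ofReal ρ * J ρ := by
    intro ρ hρ
    have h1 := key ρ hρ
    have h2 : ENNReal.ofReal (d / 2) ≤ ENNReal.ofReal (ρ ^ 2 / (2 * lam)) * J ρ := by
      have e : ENNReal.ofReal d = ENNReal.ofReal (d / 2) + ENNReal.ofReal (d / 2) := by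
        rw [← ENNReal.ofReal_add (by positivity) (by positivity)]; congr 1; ring
      rw [e] at h1
      exact (ENNReal.add_le_add_iff_left ENNReal.ofReal_ne_top).1 h1
    calc ENNReal.ofReal (d * lam) * ENNReal.ofReal ρ⁻¹
        = ENNReal.ofReal (2 * lam * ρ⁻¹) * ENNReal.ofReal (d / 2) := by
          have := hρ.1
          rw [← ENNReal.ofReal_mul (by positivity), ← ENNReal.ofReal_mul (by positivity)]
          congr 1; ring
      _ ≤ ENNReal.ofReal (2 * lam * ρ⁻¹) * (ENNReal.ofReal (ρ ^ 2 / (2 * lam)) * J ρ) := by gcongr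
      _ = _ := by
          have := hρ.1
          rw [← mul_assoc, ← ENNReal.ofReal_mul (by positivity)]
          congr 2; field_simp
  have hfin : ∫⁻ ρ in Ioo 0 R, ENNReal.ofReal ρ * J ρ < ⊤ := by
    refine lt_of_le_of_lt ?_ hA2
    refine (lintegral_mono_set (t := Ioi 0) (fun x hx => hx.1)).trans (le_of_eq ?_)
    refine lintegral_congr fun ρ => ?_
    simp only [hJ, smul_eq_mul]
    rw [lintegral_const_mul _ (hGP ρ)]
  have : ∫⁻ ρ in Ioo 0 R, ENNReal.ofReal (d * lam) * ENNReal.ofReal ρ⁻¹ ≤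
      ∫⁻ ρ in Ioo 0 R, ENNReal.ofReal ρ * J ρ := setLIntegral_mono' measurableSet_Ioo key2
  rw [lintegral_const_mul _ (by fun_prop), lintegral_inv_top hR, ENNReal.mul_top] at this
  · exact absurd hfin (not_lt.2 this)
  · rw [Ne, ENNReal.ofReal_eq_zero, not_le]; positivity

end OSCE
end

section
open Set Filter Metric Topology MeasureTheory

namespace OSCE

structure Conf (Ω : Set ℂ) (Φ ψ : ℂ → ℂ) : Prop where
  open' : IsOpen Ω
  dΦ : DifferentiableOn ℂ Φ Ω
  dψ : DifferentiableOn ℂ ψ (ball 0 1)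
  mΦ : ∀ z ∈ Ω, Φ z ∈ ball (0:ℂ) 1
  mψ : ∀ z ∈ ball (0:ℂ) 1, ψ z ∈ Ω
  l : ∀ z ∈ Ω, ψ (Φ z) = z
  r : ∀ z ∈ ball (0:ℂ) 1, Φ (ψ z) = z
  d : ∀ z ∈ Ω, deriv Φ z ≠ 0

lemma exists_conf {Ω : Set ℂ} (hU : IsOpen Ω) (hUc : IsSimplyConnected Ω)
    (hbd : Bornology.IsBounded Ω) : ∃ Φ ψ, Conf Ω Φ ψ := by
  obtain ⟨Φ, hd, hbij, hder⟩ := rmt hU hUc hbd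
  set ψ := Function.invFunOn Φ Ω with hψ
  have hm : ∀ z ∈ ball (0:ℂ) 1, ψ z ∈ Ω := fun z hz => Function.invFunOn_mem (hbij.surjOn hz)
  have hr : ∀ z ∈ ball (0:ℂ) 1, Φ (ψ z) = z := fun z hz => Function.invFunOn_eq (hbij.surjOn hz)
  have hl : ∀ z ∈ Ω, ψ (Φ z) = z := fun z hz =>
    hbij.injOn (hm _ (hbij.mapsTo hz)) hz (hr _ (hbij.mapsTo hz))
  refine ⟨Φ, ψ, hU, hd, ?_, hbij.mapsTo, hm, hl, hr, hder⟩
  intro w hw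
  have hz := hm w hw
  have hst : HasStrictDerivAt Φ (deriv Φ (ψ w)) (ψ w) :=
    (hd.analyticAt (hU.mem_nhds hz)).hasStrictDerivAt
  have hcont : ContinuousAt ψ w := by
    intro V hV
    have h1 : Φ '' (V ∩ Ω) ∈ 𝓝 (Φ (ψ w)) := by
      rw [← hst.map_nhds_eq (hder _ hz)]
      exact image_mem_map (inter_mem hV (hU.mem_nhds hz))
    rw [hr w hw] at h1
    rw [mem_map]
    filter_upwards [h1]
    rintro _ ⟨y, ⟨hy, hyΩ⟩, rfl⟩
    simpa [hl y hyΩ] using hy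
  exact (HasDerivAt.of_local_left_inverse hcont hst.hasDerivAt (hder _ hz)
    (by filter_upwards [isOpen_ball.mem_nhds hw] with y hy using hr y hy)).differentiableAt.differentiableWithinAt

lemma Conf.injΦ {Ω Φ ψ} (C : Conf Ω Φ ψ) : InjOn Φ Ω := fun a ha b hb e => by
  rw [← C.l a ha, ← C.l b hb, e]

lemma Conf.injψ {Ω Φ ψ} (C : Conf Ω Φ ψ) : InjOn ψ (ball 0 1) := fun a ha b hb e => by
  rw [← C.r a ha, ← C.r b hb, e]

lemma Conf.rotate {Ω Φ ψ} (C : Conf Ω Φ ψ) {u : ℂ} (hu : ‖u‖ = 1) :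
    Conf Ω (fun z => u * Φ z) (fun z => ψ (u⁻¹ * z)) := by
  have hu0 : u ≠ 0 := by rw [← norm_pos_iff, hu]; norm_num
  have hm : ∀ z ∈ ball (0:ℂ) 1, u⁻¹ * z ∈ ball (0:ℂ) 1 := by
    intro z hz; simpa [hu] using hz
  refine ⟨C.open', C.dΦ.const_mul u, ?_, ?_, fun z hz => C.mψ _ (hm z hz), ?_, ?_, ?_⟩
  · exact C.dψ.comp (by fun_prop) hm
  · intro z hz; simpa [hu] using C.mΦ z hz
  · intro z hz; rw [inv_mul_cancel_left₀ hu0]; exact C.l z hz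
  · intro z hz; rw [C.r _ (hm z hz), mul_inv_cancel_left₀ hu0]
  · intro z hz
    rw [((C.dΦ.differentiableAt (C.open'.mem_nhds hz)).hasDerivAt.const_mul u).deriv]
    exact mul_ne_zero hu0 (C.d z hz)

lemma volume_ge_of_Icc {S : Set ℝ} {a b : ℝ} (h : Icc a b ⊆ S) :
    ENNReal.ofReal (b - a) ≤ volume S := by
  rw [← Real.volume_Icc]; exact measure_mono h

section
variable {Q : Set ℂ} {h Φ ψ : ℂ → ℂ} {p : ℂ}

lemma nhds_conv (hQv : Convex ℝ Q) (hc : ContinuousOn h Q) (hp : p ∈ Q) {ρ : ℝ} (hρ : 0 < ρ) :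
    ∃ N ∈ 𝓝[interior Q] p, N ⊆ interior Q ∧ IsPreconnected N ∧ ∀ z ∈ N, dist (h z) (h p) < ρ := by
  obtain ⟨ε, hε, hh⟩ := Metric.continuousWithinAt_iff.1 (hc p hp) ρ hρ
  refine ⟨interior Q ∩ ball p ε, inter_mem_nhdsWithin _ (ball_mem_nhds p hε), inter_subset_left,
    (hQv.interior.inter (convex_ball p ε)).isPreconnected, ?_⟩
  rintro z ⟨hz, hz2⟩
  exact hh (interior_subset hz) hz2

lemma image_preconn (hc : ContinuousOn h Q) (C : Conf (h '' interior Q) Φ ψ) {N : Set ℂ}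
    (hN : N ⊆ interior Q) (hNp : IsPreconnected N) : IsPreconnected ((fun z => Φ (h z)) '' N) := by
  refine hNp.image _ ?_
  exact (C.dΦ.continuousOn.comp (hc.mono interior_subset)
    (fun z hz => mem_image_of_mem h hz)).mono hN

lemma notin (hi : InjOn h Q) (hp : p ∈ Q) (hpi : p ∉ interior Q) : h p ∉ h '' interior Q := by
  rintro ⟨z, hz, e⟩
  exact hpi (hi (interior_subset hz) hp e ▸ hz)

lemma cluster_norm (hc : ContinuousOn h Q) (hi : InjOn h Q)
    (C : Conf (h '' interior Q) Φ ψ) (hp : p ∈ Q) (hpi : p ∉ interior Q) {ζ : ℂ}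
    (hζ : MapClusterPt ζ (𝓝[interior Q] p) (fun z => Φ (h z))) : ‖ζ‖ = 1 := by
  have hle : ‖ζ‖ ≤ 1 := by
    have : ζ ∈ closedBall (0:ℂ) 1 := by
      refine isClosed_closedBall.mem_of_mapClusterPt hζ ?_
      filter_upwards [self_mem_nhdsWithin] with z hz
      exact ball_subset_closedBall (C.mΦ _ (mem_image_of_mem h hz))
    simpa using this
  refine hle.eq_of_not_lt fun hlt => ?_
  have hζb : ζ ∈ ball (0:ℂ) 1 := by simpa using hlt
  have hψ : ContinuousAt ψ ζ := (C.dψ.differentiableAt (isOpen_ball.mem_nhds hζb)).continuousAt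
  have h1 : MapClusterPt (ψ ζ) (𝓝[interior Q] p) (fun z => ψ (Φ (h z))) := MapClusterPt.continuousAt_comp hψ hζ
  have h2 : Tendsto (fun z => ψ (Φ (h z))) (𝓝[interior Q] p) (𝓝 (h p)) := by
    refine ((hc p hp).mono_left (nhdsWithin_mono p interior_subset)).congr' ?_
    filter_upwards [self_mem_nhdsWithin] with z hz
    exact (C.l _ (mem_image_of_mem h hz)).symm
  have h3 : ψ ζ = h p := by
    by_contra hne
    obtain ⟨U, V, hU, hV, hUV⟩ := t2_separation_nhds hne
    obtain ⟨z, hz1, hz2⟩ := ((h1.frequently hU).and_eventually (h2 hV)).exists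
    exact disjoint_left.1 hUV hz1 hz2
  exact notin hi hp hpi (h3 ▸ C.mψ ζ hζb)

lemma two_cluster (hQv : Convex ℝ Q) (hc : ContinuousOn h Q) (hi : InjOn h Q)
    (C : Conf (h '' interior Q) Φ ψ) (hp : p ∈ Q) (hpi : p ∉ interior Q) {ζ₁ ζ₂ : ℂ}
    (h1 : MapClusterPt ζ₁ (𝓝[interior Q] p) (fun z => Φ (h z)))
    (h2 : MapClusterPt ζ₂ (𝓝[interior Q] p) (fun z => Φ (h z))) (hlt : ζ₁.re < ζ₂.re) : False := by
  have n1 := cluster_norm hc hi C hp hpi h1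
  have n2 := cluster_norm hc hi C hp hpi h2
  obtain ⟨t₁, ht₁, ht₁'⟩ := exists_between hlt
  obtain ⟨t₂, ht₂, ht₂'⟩ := exists_between ht₁'
  have hlow : -1 < t₁ := by
    have := Complex.abs_re_le_norm ζ₁; rw [n1] at this; linarith [(abs_le.1 this).1]
  have hup : t₂ < 1 := by
    have := Complex.abs_re_le_norm ζ₂; rw [n2] at this; linarith [(abs_le.1 this).2]
  have hreal : ∀ t ∈ Icc t₁ t₂, (t : ℂ) ∈ ball (0:ℂ) 1 := by
    intro t ht
    rw [mem_ball_zero_iff, Complex.norm_real, Real.norm_eq_abs, abs_lt]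
    exact ⟨by linarith [ht.1], by linarith [ht.2]⟩
  have hψc := C.dψ.continuousOn
  obtain ⟨ρ₀, hρ₀, hρ₀'⟩ : ∃ ρ₀ > 0, ∀ t ∈ Icc t₁ t₂, ρ₀ ≤ dist (ψ t) (h p) := by
    have hcont : ContinuousOn (fun t : ℝ => dist (ψ t) (h p)) (Icc t₁ t₂) :=
      continuous_dist.comp_continuousOn ((hψc.comp (f := fun t : ℝ => (t:ℂ)) (by fun_prop) hreal).prodMk continuousOn_const)
    obtain ⟨t0, ht0, hmin⟩ := isCompact_Icc.exists_isMinOn (nonempty_Icc.2 ht₂.le) hcont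
    refine ⟨_, ?_, fun t ht => hmin ht⟩
    exact dist_pos.2 fun e => notin hi hp hpi (e ▸ C.mψ _ (hreal t0 ht0))
  obtain ⟨ρ, hρ, hvol⟩ := length_area C.open' C.dΦ C.injΦ
    (isBounded_ball.subset (image_subset_iff.2 C.mΦ)) (h p) (sub_pos.2 ht₂) hρ₀
  obtain ⟨N, hN, hNi, hNp, hNd⟩ := nhds_conv hQv hc hp hρ.1
  have hX := image_preconn hc C hNi hNp
  refine absurd hvol (not_lt.2 (volume_ge_of_Icc ?_))
  obtain ⟨z₁, hz₁N, hz₁⟩ : ∃ z ∈ N, (Φ (h z)).re < t₁ := by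
    have := (h1.frequently (Complex.continuous_re.continuousAt.eventually_lt_const ht₁)).and_eventually hN
    obtain ⟨z, hz, hzN⟩ := this.exists
    exact ⟨z, hzN, hz⟩
  obtain ⟨z₂, hz₂N, hz₂⟩ : ∃ z ∈ N, t₂ < (Φ (h z)).re := by
    have := (h2.frequently (Complex.continuous_re.continuousAt.eventually_const_lt ht₂')).and_eventually hN
    obtain ⟨z, hz, hzN⟩ := this.exists
    exact ⟨z, hzN, hz⟩
  intro t ht
  obtain ⟨x, ⟨z, hzN, rfl⟩, hxt⟩ : ∃ x ∈ (fun z => Φ (h z)) '' N, x.re = t := by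
    have := hX.intermediate_value (mem_image_of_mem _ hz₁N) (mem_image_of_mem _ hz₂N)
      (f := Complex.re) Complex.continuous_re.continuousOn
    exact this ⟨by linarith [ht.1], by linarith [ht.2]⟩
  have hxb : Φ (h z) ∈ ball (0:ℂ) 1 := C.mΦ _ (mem_image_of_mem h (hNi hzN))
  have hseg : segment ℝ (Φ (h z)) (t : ℂ) ⊆ ball (0:ℂ) 1 :=
    (convex_ball (0:ℂ) 1).segment_subset hxb (hreal t ht)
  have hzz : ψ (Φ (h z)) = h z := C.l _ (mem_image_of_mem h (hNi hzN))
  have hiv := (convex_segment (Φ (h z)) (t : ℂ)).isPreconnected.intermediate_value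
    (left_mem_segment ℝ _ _) (right_mem_segment ℝ _ _)
    (f := fun y => dist (ψ y) (h p)) (continuous_dist.comp_continuousOn ((hψc.mono hseg).prodMk continuousOn_const))
  obtain ⟨y, hy, hyρ⟩ := hiv (show ρ ∈ Icc _ _ from
    ⟨by simp only [hzz]; exact (hNd z hzN).le, hρ.2.le.trans (hρ₀' t ht)⟩)
  refine ⟨y, ⟨ψ y, ⟨C.mψ y (hseg hy), hyρ⟩, C.r y (hseg hy)⟩, ?_⟩
  obtain ⟨a, b, ha, hb, hab, rfl⟩ := hy
  have hxt' : (Φ (h z)).re = t := hxt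
  simp only [Complex.add_re, Complex.real_smul, Complex.re_ofReal_mul, Complex.ofReal_re, hxt']
  rw [← add_mul, hab, one_mul]

lemma exists_limit (hQv : Convex ℝ Q) (hQi : (interior Q).Nonempty) (hc : ContinuousOn h Q) (hi : InjOn h Q)
    (C : Conf (h '' interior Q) Φ ψ) (hp : p ∈ Q) (hpi : p ∉ interior Q) :
    ∃ ζ, ‖ζ‖ = 1 ∧ Tendsto (fun z => Φ (h z)) (𝓝[interior Q] p) (𝓝 ζ) := by
  have hcl : p ∈ closure (interior Q) := by
    rw [hQv.closure_interior_eq_closure_of_nonempty_interior hQi]; exact subset_closure hp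
  have hne : (𝓝[interior Q] p).NeBot := mem_closure_iff_nhdsWithin_neBot.1 hcl
  have hev : ∀ᶠ z in 𝓝[interior Q] p, Φ (h z) ∈ closedBall (0:ℂ) 1 := by
    filter_upwards [self_mem_nhdsWithin] with z hz
    exact ball_subset_closedBall (C.mΦ _ (mem_image_of_mem h hz))
  obtain ⟨ζ, -, hζ⟩ := (isCompact_closedBall (0:ℂ) 1).exists_mapClusterPt_of_frequently hev.frequently
  refine ⟨ζ, cluster_norm hc hi C hp hpi hζ, ?_⟩
  refine (isCompact_closedBall (0:ℂ) 1).tendsto_nhds_of_unique_mapClusterPt hev ?_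
  intro ζ' _ hζ'
  by_contra hne'
  set w := ζ' - ζ with hw
  have hw0 : w ≠ 0 := sub_ne_zero.2 hne'
  have hwn : 0 < ‖w‖ := norm_pos_iff.2 hw0
  set u := (starRingEnd ℂ) w / ‖w‖ with hu
  have hun : ‖u‖ = 1 := by
    rw [hu, norm_div, RCLike.norm_conj, Complex.norm_real, norm_norm, div_self hwn.ne']
  refine two_cluster hQv hc hi (C.rotate hun) hp hpi
    (MapClusterPt.continuousAt_comp (f := fun z => u * z) (by fun_prop) hζ)
    (MapClusterPt.continuousAt_comp (f := fun z => u * z) (by fun_prop) hζ') ?_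
  have : u * w = ‖w‖ := by
    rw [hu, div_mul_eq_mul_div, mul_comm, Complex.mul_conj, Complex.normSq_eq_norm_sq]
    push_cast
    have : (‖w‖ : ℂ) ≠ 0 := by exact_mod_cast hwn.ne'
    field_simp
  have h2 : (u * ζ').re - (u * ζ).re = ‖w‖ := by
    rw [← Complex.sub_re, ← mul_sub, ← hw, this, Complex.ofReal_re]
  change (u * ζ).re < (u * ζ').re
  linarith

end
end OSCE
end

section
open Set Filter Metric Topology MeasureTheory

namespace OSCE

lemma sphere_inter_ball_preconn {ζ : ℂ} (hζ : ‖ζ‖ = 1) {r : ℝ} (hr : 0 < r) :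
    IsPreconnected (ball (0:ℂ) 1 ∩ sphere ζ r) := by
  have hζ0 : ζ ≠ 0 := by rw [← norm_pos_iff, hζ]; norm_num
  set S : ℝ → ℂ := fun θ => ζ - ζ * (r * (Real.cos θ + Real.sin θ * Complex.I)) with hS
  have hnorm : ∀ θ, ‖S θ‖ ^ 2 = 1 - 2 * r * Real.cos θ + r ^ 2 := by
    intro θ
    have : S θ = ζ * (1 - r * (Real.cos θ + Real.sin θ * Complex.I)) := by simp only [hS]; ring
    rw [this, norm_mul, hζ, one_mul, ← Complex.normSq_eq_norm_sq, Complex.normSq_apply]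
    simp only [Complex.sub_re, Complex.one_re, Complex.mul_re, Complex.ofReal_re, Complex.add_re,
      Complex.I_re, Complex.I_im, Complex.ofReal_im, Complex.sub_im, Complex.one_im, Complex.mul_im,
      Complex.add_im]
    ring_nf
    nlinarith [Real.sin_sq_add_cos_sq θ]
  have : ball (0:ℂ) 1 ∩ sphere ζ r = S '' Ioo (-Real.arccos (r / 2)) (Real.arccos (r / 2)) := by
    apply Subset.antisymm
    · rintro z ⟨hz, hzr⟩
      set w := (ζ - z) / ζ with hw
      have hwn : ‖w‖ = r := by
        rw [mem_sphere, dist_comm, dist_eq_norm] at hzr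
        rw [hw, norm_div, hζ, hzr, div_one]
      have hz2 : z = S (Complex.arg w) := by
        have := Complex.norm_mul_cos_add_sin_mul_I w
        rw [hwn] at this
        simp only [hS]
        push_cast
        rw [this, hw]; field_simp; ring
      refine ⟨Complex.arg w, ?_, hz2.symm⟩
      have h1 : ‖z‖ ^ 2 < 1 := by
        rw [mem_ball_zero_iff] at hz; nlinarith [norm_nonneg z]
      rw [hz2, hnorm] at h1
      have h2 : r / 2 < Real.cos (Complex.arg w) := by nlinarith
      rw [mem_Ioo, ← abs_lt]
      have hle := Complex.abs_arg_le_pi w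
      rw [← Real.cos_abs] at h2
      rw [← Real.arccos_cos (abs_nonneg _) hle]
      exact Real.arccos_lt_arccos (by linarith) h2 (Real.cos_le_one _)
    · rintro _ ⟨θ, hθ, rfl⟩
      rw [mem_Ioo, ← abs_lt] at hθ
      refine ⟨?_, ?_⟩
      · have hlt2 : r / 2 < 1 := by
          by_contra hcon
          rw [Real.arccos_of_one_le (not_lt.1 hcon)] at hθ
          exact absurd hθ (not_lt.2 (abs_nonneg _))
        have hcos : r / 2 < Real.cos θ := by
          rw [← Real.cos_abs]
          have := Real.cos_lt_cos_of_nonneg_of_le_pi (abs_nonneg θ) (Real.arccos_le_pi _) hθ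
          rwa [Real.cos_arccos (by linarith) hlt2.le] at this
        rw [mem_ball_zero_iff]
        have := hnorm θ
        nlinarith [norm_nonneg (S θ)]
      · rw [mem_sphere, dist_eq_norm]
        simp only [hS, sub_sub_cancel_left, norm_neg, norm_mul, hζ, one_mul, Complex.norm_real,
          Real.norm_of_nonneg hr.le, Complex.norm_add_mul_I, Real.cos_sq_add_sin_sq]
        simp
  rw [this]
  refine isPreconnected_Ioo.image _ ?_
  simp only [hS]; fun_prop

section
variable {Q : Set ℂ} {h Φ ψ : ℂ → ℂ}

lemma limit_inj (hQv : Convex ℝ Q) (hQi : (interior Q).Nonempty) (hQb : Bornology.IsBounded (h '' interior Q))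
    (hc : ContinuousOn h Q) (hi : InjOn h Q)
    (C : Conf (h '' interior Q) Φ ψ) {p₁ p₂ ζ : ℂ} (hp₁ : p₁ ∈ Q) 
    (hp₂ : p₂ ∈ Q) (hζ : ‖ζ‖ = 1)
    (h1 : Tendsto (fun z => Φ (h z)) (𝓝[interior Q] p₁) (𝓝 ζ))
    (h2 : Tendsto (fun z => Φ (h z)) (𝓝[interior Q] p₂) (𝓝 ζ)) : p₁ = p₂ := by
  by_contra hne'
  have hcl : ∀ p ∈ Q, (𝓝[interior Q] p).NeBot := by
    intro p hp
    refine mem_closure_iff_nhdsWithin_neBot.1 ?_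
    rw [hQv.closure_interior_eq_closure_of_nonempty_interior hQi]; exact subset_closure hp
  set w := h p₂ - h p₁ with hw
  have hw0 : w ≠ 0 := sub_ne_zero.2 fun e => hne' (hi hp₁ hp₂ e.symm)
  have hwn : 0 < ‖w‖ := norm_pos_iff.2 hw0
  set u := (starRingEnd ℂ) w / ‖w‖ with hu
  have hun : ‖u‖ = 1 := by
    rw [hu, norm_div, RCLike.norm_conj, Complex.norm_real, norm_norm, div_self hwn.ne']
  have hu0 : u ≠ 0 := by rw [← norm_pos_iff, hun]; norm_num
  have huw : u * w = ‖w‖ := by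
    rw [hu, div_mul_eq_mul_div, mul_comm, Complex.mul_conj, Complex.normSq_eq_norm_sq]
    push_cast
    have : (‖w‖ : ℂ) ≠ 0 := by exact_mod_cast hwn.ne'
    field_simp
  have hre : (u * h p₂).re - (u * h p₁).re = ‖w‖ := by
    rw [← Complex.sub_re, ← mul_sub, ← hw, huw, Complex.ofReal_re]
  have aux : ∀ p ∈ Q, Tendsto (fun z => Φ (h z)) (𝓝[interior Q] p) (𝓝 ζ) →
      ∃ R > 0, ∀ r ∈ Ioo 0 R, ∃ y ∈ ball (0:ℂ) 1 ∩ sphere ζ r, dist (u * ψ y) (u * h p) < ‖w‖ / 3 := by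
    intro p hp ht
    obtain ⟨N, hN, hNi, hNp, hNd⟩ := nhds_conv hQv hc hp (show 0 < ‖w‖ / 3 by positivity)
    have := hcl p hp
    obtain ⟨z₀, hz₀⟩ := Filter.nonempty_of_mem hN
    have hX := image_preconn hc C hNi hNp
    have hmem : ∀ z ∈ N, Φ (h z) ∈ ball (0:ℂ) 1 := fun z hz => C.mΦ _ (mem_image_of_mem h (hNi hz))
    refine ⟨dist (Φ (h z₀)) ζ, dist_pos.2 ?_, ?_⟩
    · intro e
      have := hmem z₀ hz₀
      rw [e, mem_ball_zero_iff, hζ] at this; exact lt_irrefl _ this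
    · intro r hr
      obtain ⟨z₁, hz₁, hz₁N⟩ := ((Metric.tendsto_nhds.1 ht r hr.1).and hN).exists
      obtain ⟨y, ⟨z, hz, rfl⟩, hy⟩ := hX.intermediate_value (mem_image_of_mem _ hz₁N)
        (mem_image_of_mem _ hz₀) (f := fun y => dist y ζ) (by fun_prop) ⟨hz₁.le, hr.2.le⟩
      refine ⟨_, ⟨hmem z hz, hy⟩, ?_⟩
      rw [C.l _ (mem_image_of_mem h (hNi hz)), dist_eq_norm, ← mul_sub, norm_mul, hun, one_mul,
        ← dist_eq_norm]
      exact hNd z hz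
  obtain ⟨R₁, hR₁, H₁⟩ := aux p₁ hp₁ h1
  obtain ⟨R₂, hR₂, H₂⟩ := aux p₂ hp₂ h2
  obtain ⟨r, hr, hvol⟩ := length_area (f := fun z => u * ψ z) isOpen_ball (C.dψ.const_mul u)
    (fun a ha b hb e => C.injψ ha hb (mul_left_cancel₀ hu0 e))
    (by
      obtain ⟨K, hK⟩ := hQb.exists_norm_le
      refine isBounded_iff_forall_norm_le.2 ⟨K, ?_⟩
      rintro _ ⟨z, hz, rfl⟩
      rw [norm_mul, hun, one_mul]
      exact hK _ (C.mψ z hz)) ζ (show 0 < ‖w‖ / 3 by positivity) (lt_min hR₁ hR₂)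
  obtain ⟨y₁, hy₁, hd₁⟩ := H₁ r ⟨hr.1, hr.2.trans_le (min_le_left _ _)⟩
  obtain ⟨y₂, hy₂, hd₂⟩ := H₂ r ⟨hr.1, hr.2.trans_le (min_le_right _ _)⟩
  have hpre := sphere_inter_ball_preconn hζ hr.1
  have hiv := hpre.intermediate_value hy₁ hy₂ (f := fun y => (u * ψ y).re)
    (Complex.continuous_re.comp_continuousOn
      ((C.dψ.const_mul u).continuousOn.mono inter_subset_left))
  rw [dist_eq_norm] at hd₁ hd₂
  have e₁ := (Complex.abs_re_le_norm _).trans_lt hd₁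
  have e₂ := (Complex.abs_re_le_norm _).trans_lt hd₂
  rw [Complex.sub_re, abs_lt] at e₁ e₂
  refine absurd hvol (not_lt.2 ?_)
  have := volume_ge_of_Icc (S := Complex.re '' ((fun z => u * ψ z) '' (ball 0 1 ∩ sphere ζ r))) (a := (u * ψ y₁).re) (b := (u * ψ y₂).re) (by
    rw [image_image]; exact hiv)
  refine le_trans (ENNReal.ofReal_le_ofReal ?_) this
  linarith [e₁.1, e₁.2, e₂.1, e₂.2]

lemma simply_conn_image (hQc : IsCompact Q) (hQv : Convex ℝ Q) (hQi : (interior Q).Nonempty)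
    (hc : ContinuousOn h Q) (hi : InjOn h Q) : IsSimplyConnected (h '' interior Q) := by
  have : CompactSpace Q := isCompact_iff_compactSpace.1 hQc
  have hemb : Topology.IsEmbedding (Q.domRestrict h) :=
    (Topology.IsClosedEmbedding.of_continuous_injective_isClosedMap
      (continuousOn_iff_continuous_domRestrict.1 hc) (injOn_iff_injective.1 hi)
      (continuousOn_iff_continuous_domRestrict.1 hc).isClosedMap).isEmbedding
  have hinc : Topology.IsEmbedding (Set.inclusion (interior_subset (s := Q))) :=
    Topology.IsEmbedding.inclusion _
  have hemb2 := hemb.comp hinc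
  have hr : range (Q.domRestrict h ∘ Set.inclusion (interior_subset (s := Q))) = h '' interior Q := by
    ext y; simp [Set.inclusion]
  have : ContractibleSpace (interior Q) := hQv.interior.contractibleSpace hQi
  have e := hemb2.toHomeomorph
  rw [hr] at e
  have : ContractibleSpace (h '' interior Q) := e.symm.contractibleSpace
  change SimplyConnectedSpace _
  infer_instance

lemma carath (hQc : IsCompact Q) (hQv : Convex ℝ Q) (hQi : (interior Q).Nonempty)
    (hc : ContinuousOn h Q) (hi : InjOn h Q) (hΩ : IsOpen (h '' interior Q)) :
    ∃ Φ Ψ : ℂ → ℂ, DifferentiableOn ℂ Φ (h '' interior Q) ∧ (∀ w ∈ h '' interior Q, deriv Φ w ≠ 0) ∧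
      (∀ z ∈ interior Q, Ψ z = Φ (h z)) ∧ ContinuousOn Ψ Q ∧ InjOn Ψ Q ∧ Ψ '' Q = closedBall 0 1 ∧
      (∀ z ∈ interior Q, ‖Ψ z‖ < 1) ∧ ∀ z ∈ Q, z ∉ interior Q → ‖Ψ z‖ = 1 := by
  have hbd : Bornology.IsBounded (h '' interior Q) :=
    (hQc.image_of_continuousOn hc).isBounded.subset (image_mono interior_subset)
  obtain ⟨Φ, ψ, C⟩ := exists_conf hΩ (simply_conn_image hQc hQv hQi hc hi) hbd
  have hcl : ∀ p ∈ Q, p ∈ closure (interior Q) := by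
    intro p hp
    rw [hQv.closure_interior_eq_closure_of_nonempty_interior hQi]; exact subset_closure hp
  have hlim : ∀ p ∈ Q, p ∉ interior Q → ∃ ζ, ‖ζ‖ = 1 ∧
      Tendsto (fun z => Φ (h z)) (𝓝[interior Q] p) (𝓝 ζ) := fun p hp hpi =>
    exists_limit hQv hQi hc hi C hp hpi
  have hcont : ContinuousOn (fun z => Φ (h z)) (interior Q) :=
    C.dΦ.continuousOn.comp (hc.mono interior_subset) (fun z hz => mem_image_of_mem h hz)
  set Ψ := extendFrom (interior Q) (fun z => Φ (h z)) with hΨ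
  have hin : ∀ z ∈ interior Q, Ψ z = Φ (h z) := fun z hz =>
    extendFrom_eq (subset_closure hz) (hcont z hz)
  have hbdy : ∀ p ∈ Q, p ∉ interior Q → ‖Ψ p‖ = 1 ∧
      Tendsto (fun z => Φ (h z)) (𝓝[interior Q] p) (𝓝 (Ψ p)) := by
    intro p hp hpi
    obtain ⟨ζ, hζ, ht⟩ := hlim p hp hpi
    rw [hΨ, extendFrom_eq (hcl p hp) ht]
    exact ⟨hζ, ht⟩
  have hlt : ∀ z ∈ interior Q, ‖Ψ z‖ < 1 := by
    intro z hz
    rw [hin z hz]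
    simpa using C.mΦ _ (mem_image_of_mem h hz)
  have hΨc : ContinuousOn Ψ Q := by
    refine continuousOn_extendFrom hcl ?_
    intro p hp
    by_cases hpi : p ∈ interior Q
    · exact ⟨_, hcont p hpi⟩
    · obtain ⟨ζ, -, ht⟩ := hlim p hp hpi
      exact ⟨ζ, ht⟩
  refine ⟨Φ, Ψ, C.dΦ, C.d, hin, hΨc, ?_, ?_, hlt, fun z hz hzi => (hbdy z hz hzi).1⟩
  · intro a ha b hb e
    by_cases hai : a ∈ interior Q <;> by_cases hbi : b ∈ interior Q
    · rw [hin a hai, hin b hbi] at e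
      exact hi ha hb (C.injΦ (mem_image_of_mem h hai) (mem_image_of_mem h hbi) e)
    · have := hlt a hai
      rw [e, (hbdy b hb hbi).1] at this
      exact absurd this (lt_irrefl _)
    · have := hlt b hbi
      rw [← e, (hbdy a ha hai).1] at this
      exact absurd this (lt_irrefl _)
    · exact limit_inj hQv hQi hbd hc hi C ha hb (hbdy a ha hai).1 (hbdy a ha hai).2
        (e ▸ (hbdy b hb hbi).2)
  · apply Subset.antisymm
    · rintro _ ⟨z, hz, rfl⟩
      rw [mem_closedBall_zero_iff]
      by_cases hzi : z ∈ interior Q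
      · exact (hlt z hzi).le
      · exact (hbdy z hz hzi).1.le
    · rw [← closure_ball (0:ℂ) one_ne_zero]
      refine closure_minimal ?_ (hQc.image_of_continuousOn hΨc).isClosed
      intro y hy
      obtain ⟨z, hz, e⟩ := C.mψ y hy
      refine ⟨z, interior_subset hz, ?_⟩
      rw [hin z hz, e, C.r y hy]

end
end OSCE
end

section
open Set Filter Metric Topology

namespace OSCE

def FlatAt {X : Type*} [TopologicalSpace X] (A : Set X) (x : X) : Prop :=
  ∃ e : OpenPartialHomeomorph X ℂ, x ∈ e.source ∧ ∀ y ∈ e.source, (y ∈ A ↔ (e y).im ≤ 0)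

lemma FlatAt.congr {X : Type*} [TopologicalSpace X] {A B : Set X} {x : X} (h : FlatAt A x)
    (hAB : ∀ᶠ y in 𝓝 x, (y ∈ A ↔ y ∈ B)) : FlatAt B x := by
  obtain ⟨e, hx, he⟩ := h
  obtain ⟨U, hU, hUo, hxU⟩ := eventually_nhds_iff.1 hAB
  refine ⟨e.restrOpen U hUo, ?_, ?_⟩
  · simp [hx, hxU]
  · intro y hy
    rw [e.restrOpen_source] at hy
    rw [← hU y hy.2]
    exact he y hy.1

lemma FlatAt.of_chart {X Y : Type*} [TopologicalSpace X] [TopologicalSpace Y] {A : Set X} {A' : Set Y} {x : X}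
    (c : OpenPartialHomeomorph X Y) (hx : x ∈ c.source) (h : FlatAt A' (c x))
    (hA : ∀ y ∈ c.source, (y ∈ A ↔ c y ∈ A')) : FlatAt A x := by
  obtain ⟨e, hxe, he⟩ := h
  refine ⟨c.trans e, by simp [hx, hxe], ?_⟩
  intro y hy
  rw [c.trans_source] at hy
  rw [hA y hy.1, he _ hy.2]
  rfl

lemma exists_pair_chart {u v : ℂ → ℝ} {u' v' : ℂ →L[ℝ] ℝ} {w : ℂ} (hu : HasStrictFDerivAt u u' w)
    (hv : HasStrictFDerivAt v v' w) (hd : u' 1 * v' Complex.I - u' Complex.I * v' 1 ≠ 0) :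
    ∃ e : OpenPartialHomeomorph ℂ ℂ, w ∈ e.source ∧ ∀ y, (e y).re = u y ∧ (e y).im = v y := by
  set L : ℂ →L[ℝ] ℂ := Complex.equivRealProdCLM.symm.toContinuousLinearMap.comp (u'.prod v') with hL
  have hg : HasStrictFDerivAt (fun z => Complex.equivRealProdCLM.symm (u z, v z)) L w :=
    (Complex.equivRealProdCLM.symm.toContinuousLinearMap.hasStrictFDerivAt).comp w (hu.prodMk hv)
  have hdet : L.det ≠ 0 := by
    rw [det_complex]
    simpa [hL] using hd
  have hg' : HasStrictFDerivAt (fun z => Complex.equivRealProdCLM.symm (u z, v z))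
      (L.toContinuousLinearEquivOfDetNeZero hdet : ℂ →L[ℝ] ℂ) w := by simpa using hg
  refine ⟨hg'.toOpenPartialHomeomorph _, hg'.mem_toOpenPartialHomeomorph_source, ?_⟩
  intro y
  simp

noncomputable def cornerHomeo : ℂ ≃ₜ ℂ where
  toFun z := ⟨z.re - z.im, min z.re z.im⟩
  invFun w := ⟨w.im + max w.re 0, w.im + max (-w.re) 0⟩
  left_inv z := by
    rcases le_total z.re z.im with h | h
    · simp [h]
    · simp [h]
  right_inv w := by
    rcases le_total w.re 0 with h | h
    · simp [h]
    · simp [h]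
  continuous_toFun := by
    have : Continuous fun z : ℂ => Complex.equivRealProdCLM.symm (z.re - z.im, min z.re z.im) := by
      fun_prop
    exact this
  continuous_invFun := by
    have : Continuous fun w : ℂ => Complex.equivRealProdCLM.symm
      (w.im + max w.re 0, w.im + max (-w.re) 0) := by fun_prop
    exact this

lemma flatAt_corner {u v : ℂ → ℝ} {u' v' : ℂ →L[ℝ] ℝ} {w : ℂ} (hu : HasStrictFDerivAt u u' w)
    (hv : HasStrictFDerivAt v v' w) (hd : u' 1 * v' Complex.I - u' Complex.I * v' 1 ≠ 0) :
    FlatAt {z | u z ≤ 0 ∨ v z ≤ 0} w := by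
  obtain ⟨e, hw, he⟩ := exists_pair_chart hu hv hd
  refine ⟨e.transHomeomorph cornerHomeo, hw, ?_⟩
  intro y hy
  change (u y ≤ 0 ∨ v y ≤ 0) ↔ min (e y).re (e y).im ≤ 0
  rw [(he y).1, (he y).2, min_le_iff]

lemma flatAt_smooth {v : ℂ → ℝ} {v' : ℂ →L[ℝ] ℝ} {w : ℂ}
    (hv : HasStrictFDerivAt v v' w) (hd : v' ≠ 0) : FlatAt {z | v z ≤ 0} w := by
  set u' : ℂ →L[ℝ] ℝ := (v' Complex.I) • Complex.reCLM - (v' 1) • Complex.imCLM with hu'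
  have hne : u' 1 * v' Complex.I - u' Complex.I * v' 1 ≠ 0 := by
    simp only [hu']
    simp
    intro h0
    apply hd
    have h1 : v' Complex.I = 0 := by nlinarith [sq_nonneg (v' 1), sq_nonneg (v' Complex.I)]
    have h2 : v' 1 = 0 := by nlinarith [sq_nonneg (v' 1), sq_nonneg (v' Complex.I)]
    ext z
    have : z = z.re • (1:ℂ) + z.im • Complex.I := by simp
    rw [this, map_add, map_smul, map_smul, h1, h2]; simp
  obtain ⟨e, hw, he⟩ := exists_pair_chart u'.hasStrictFDerivAt hv hne
  exact ⟨e, hw, fun y hy => by simp [(he y).2]⟩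

lemma exists_chart_of_compact {K : Set ℂ} (hK : IsCompact K) {F : ℂ → ℂ} (hc : ContinuousOn F K)
    (hi : InjOn F K) {z₀ : ℂ} (hz : z₀ ∈ interior K) (hF : F '' K ∈ 𝓝 (F z₀)) :
    ∃ G : OpenPartialHomeomorph ℂ ℂ, z₀ ∈ G.source ∧ G.source ⊆ interior K ∧ ∀ z, G z = F z := by
  set k := Function.invFunOn F K with hk
  have hkm : ∀ y ∈ F '' K, k y ∈ K := fun y hy => Function.invFunOn_mem hy
  have hr : ∀ y ∈ F '' K, F (k y) = y := fun y hy => Function.invFunOn_eq hy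
  have hl : ∀ z ∈ K, k (F z) = z := fun z hz =>
    hi (hkm _ (mem_image_of_mem F hz)) hz (hr _ (mem_image_of_mem F hz))
  have hkc : ContinuousOn k (F '' K) := by
    rw [continuousOn_iff_isClosed]
    intro t ht
    refine ⟨F '' (K ∩ t), ((hK.inter_right ht).image_of_continuousOn
      (hc.mono inter_subset_left)).isClosed, ?_⟩
    ext y
    constructor
    · rintro ⟨hy, z, hz, rfl⟩
      refine ⟨⟨z, ⟨hz, ?_⟩, rfl⟩, ⟨z, hz, rfl⟩⟩
      have : k (F z) ∈ t := hy
      rwa [hl z hz] at this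
    · rintro ⟨⟨z, ⟨hz, hzt⟩, rfl⟩, -⟩
      refine ⟨?_, ⟨z, hz, rfl⟩⟩
      change k (F z) ∈ t
      rwa [hl z hz]
  have hW : interior (F '' K) ⊆ F '' K := interior_subset
  have hI : interior K ⊆ K := interior_subset
  refine ⟨{ toFun := F, invFun := k, source := interior K ∩ F ⁻¹' interior (F '' K),
            target := interior (F '' K) ∩ k ⁻¹' interior K,
            map_source' := ?_, map_target' := ?_, left_inv' := ?_, right_inv' := ?_,
            open_source := ?_, open_target := ?_, continuousOn_toFun := ?_,
            continuousOn_invFun := ?_ }, ?_, inter_subset_left, fun z => rfl⟩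
  · rintro z ⟨hz, hz2⟩
    refine ⟨hz2, ?_⟩
    change k (F z) ∈ interior K
    rwa [hl z (hI hz)]
  · rintro y ⟨hy, hy2⟩
    refine ⟨hy2, ?_⟩
    change F (k y) ∈ interior (F '' K)
    rwa [hr y (hW hy)]
  · rintro z ⟨hz, hz2⟩; exact hl z (hI hz)
  · rintro y ⟨hy, hy2⟩; exact hr y (hW hy)
  · exact hc.mono (inter_subset_left.trans hI)
  · exact hkc.mono (inter_subset_left.trans hW)
  · exact (hc.mono hI).isOpen_inter_preimage isOpen_interior isOpen_interior
  · exact (hkc.mono hW).isOpen_inter_preimage isOpen_interior isOpen_interior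
  · exact ⟨hz, mem_interior_iff_mem_nhds.2 hF⟩

lemma FlatAt.im_eq_zero {X : Type*} [TopologicalSpace X] {B : Set X} {p : X} {e : OpenPartialHomeomorph X ℂ}
    (hpe : p ∈ e.source) (he : ∀ y ∈ e.source, (y ∈ B ↔ (e y).im ≤ 0)) (hp : p ∈ frontier B) :
    (e p).im = 0 := by
  have hcont : ContinuousAt (fun y => (e y).im) p :=
    Complex.continuous_im.continuousAt.comp (e.continuousAt hpe)
  have hs := e.open_source.mem_nhds hpe
  rcases lt_trichotomy (e p).im 0 with h | h | h
  · exfalso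
    apply hp.2
    rw [mem_interior_iff_mem_nhds]
    filter_upwards [hs, hcont.eventually_lt_const h] with y hy hy2
    exact (he y hy).2 hy2.le
  · exact h
  · exfalso
    obtain ⟨y, ⟨hy, hy2⟩, hyB⟩ := mem_closure_iff_nhds.1 hp.1 _ (inter_mem hs (hcont.eventually_const_lt h))
    have h3 : 0 < (e y).im := hy2
    exact absurd ((he y hy).1 hyB) (not_le.2 h3)

end OSCE
end

section
open Set Filter Metric Topology

namespace OSCE

lemma interior_halfdisc {c : ℂ} {a : ℝ} (ha : 0 < a) :
    interior (closedBall c a ∩ {z : ℂ | 0 ≤ z.im}) = ball c a ∩ {z : ℂ | 0 < z.im} := by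
  rw [interior_inter, interior_closedBall _ ha.ne']
  congr 1
  exact Complex.interior_setOfPred_le_im 0

noncomputable def foldPi (z : ℂ) : ℂ := ⟨z.re, max z.im 0⟩

lemma continuous_foldPi : Continuous foldPi := by
  have : Continuous fun z : ℂ => Complex.equivRealProdCLM.symm (z.re, max z.im 0) := by fun_prop
  exact this

lemma foldPi_mem {c z : ℂ} {a : ℝ} (hc : c.im = 0) (hz : z ∈ closedBall c a) :
    foldPi z ∈ closedBall c a ∩ {z : ℂ | 0 ≤ z.im} := by
  refine ⟨?_, show 0 ≤ max z.im 0 from le_max_right _ _⟩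
  rw [mem_closedBall, Complex.dist_eq] at hz ⊢
  refine le_trans ?_ hz
  rw [Complex.norm_def, Complex.norm_def]
  apply Real.sqrt_le_sqrt
  simp only [Complex.normSq_apply, Complex.sub_re, Complex.sub_im, hc, foldPi]
  rcases le_total z.im 0 with h | h
  · simp [h]; nlinarith [mul_self_nonneg z.im]
  · simp [h]

lemma foldPi_of_nonneg {z : ℂ} (h : 0 ≤ z.im) : foldPi z = z := by
  apply Complex.ext <;> simp [foldPi, h]

lemma bdry_chart {B : Set ℂ} {p : ℂ} (hflat : FlatAt B p) (hp : p ∈ frontier B) :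
    ∃ G : OpenPartialHomeomorph ℂ ℂ, p ∈ G.source ∧ ‖G p‖ = 1 ∧
      (∀ y ∈ G.source, (y ∈ B ↔ 1 ≤ ‖G y‖)) ∧ DifferentiableOn ℂ G (G.source \ B) ∧
      ∀ y ∈ G.source \ B, deriv G y ≠ 0 := by
  obtain ⟨e, hpe, he⟩ := hflat
  have hc0 := FlatAt.im_eq_zero hpe he hp
  set c := e p with hc
  obtain ⟨a, ha, hat⟩ := Metric.nhds_basis_closedBall.mem_iff.1
    (e.open_target.mem_nhds (e.map_source hpe))
  rw [← hc] at hat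
  set Q := closedBall c a ∩ {z : ℂ | 0 ≤ z.im} with hQ
  have hQint : interior Q = ball c a ∩ {z : ℂ | 0 < z.im} := interior_halfdisc ha
  have hQc : IsCompact Q := (isCompact_closedBall c a).inter_right
    (isClosed_le continuous_const Complex.continuous_im)
  have hQv : Convex ℝ Q := (convex_closedBall c a).inter (convex_halfSpace_im_ge 0)
  have hQi : (interior Q).Nonempty := by
    rw [hQint]
    refine ⟨c + ((a/2 : ℝ) : ℂ) * Complex.I, ?_, ?_⟩
    · rw [mem_ball, dist_self_add_left]; simp [abs_of_pos ha]; linarith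
    · simp [hc0, ha]
  have hQt : Q ⊆ e.target := inter_subset_left.trans hat
  have hes : ContinuousOn e.symm Q := e.continuousOn_symm.mono hQt
  have hei : InjOn e.symm Q := e.symm.injOn.mono hQt
  have hΩ : IsOpen (e.symm '' interior Q) :=
    e.symm.isOpen_image_of_subset_source isOpen_interior (interior_subset.trans hQt)
  obtain ⟨Φ, Ψ, hΦd, hΦn, hΨΦ, hΨc, hΨi, hΨim, hΨlt, hΨ1⟩ := carath hQc hQv hQi hes hei hΩ
  have hcQ : c ∈ Q := ⟨mem_closedBall_self ha.le, hc0.ge⟩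
  have hcn : c ∉ interior Q := by
    rw [hQint]; rintro ⟨-, h⟩; exact (lt_irrefl (0:ℝ)) (by simpa [hc0] using h)
  have hΨc1 : ‖Ψ c‖ = 1 := hΨ1 c hcQ hcn
  set F : ℂ → ℂ := fun z => ((1 + max (-z.im) 0 : ℝ) : ℂ) * Ψ (foldPi z) with hF
  have hFpos : ∀ z : ℂ, 0 ≤ z.im → F z = Ψ z := by
    intro z hz
    simp only [hF]
    rw [foldPi_of_nonneg hz, max_eq_right (by linarith)]; simp
  have hFneg : ∀ z ∈ closedBall c a, z.im ≤ 0 → ‖F z‖ = 1 - z.im ∧ ‖Ψ (foldPi z)‖ = 1 := by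
    intro z hz hz0
    have hm := foldPi_mem hc0 hz
    have hn : ‖Ψ (foldPi z)‖ = 1 := by
      apply hΨ1 _ hm
      rw [hQint]; rintro ⟨-, h⟩
      have : (foldPi z).im = 0 := by simp [foldPi, hz0]
      exact (lt_irrefl (0:ℝ)) (by simpa [this] using h)
    refine ⟨?_, hn⟩
    simp only [hF]
    rw [norm_mul, hn, max_eq_left (by linarith), Complex.norm_real, Real.norm_eq_abs,
      abs_of_nonneg (by linarith)]; ring
  have hFle : ∀ z ∈ closedBall c a, 0 ≤ z.im → ‖F z‖ ≤ 1 := by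
    intro z hz hz0
    rw [hFpos z hz0]
    have : Ψ z ∈ closedBall (0:ℂ) 1 := hΨim ▸ mem_image_of_mem Ψ ⟨hz, hz0⟩
    simpa using this
  have hFlt : ∀ z ∈ ball c a, 0 < z.im → ‖F z‖ < 1 := by
    intro z hz hz0
    rw [hFpos z hz0.le]
    exact hΨlt z (by rw [hQint]; exact ⟨hz, hz0⟩)
  have hFc : ContinuousOn F (closedBall c a) := by
    apply ContinuousOn.mul
    · fun_prop
    · exact hΨc.comp continuous_foldPi.continuousOn (fun z hz => foldPi_mem hc0 hz)
  have hFi : InjOn F (closedBall c a) := by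
    have key : ∀ z ∈ closedBall c a, ∀ w ∈ closedBall c a, F z = F w → z.im ≤ w.im → z = w := by
      intro z hz w hw h hzw
      have hn := congrArg norm h
      rcases le_total w.im 0 with h0 | h0
      · have h1 := hFneg z hz (hzw.trans h0)
        have h2 := hFneg w hw h0
        have h3 : z.im = w.im := by linarith [h1.1, h2.1]
        have h4 : Ψ (foldPi z) = Ψ (foldPi w) := by
          simp only [hF, h3] at h
          have : ((1 + max (-w.im) 0 : ℝ) : ℂ) ≠ 0 := by
            norm_cast
            have := le_max_right (-w.im) 0
            linarith
          exact mul_left_cancel₀ this h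
        have h5 := hΨi (foldPi_mem hc0 hz) (foldPi_mem hc0 hw) h4
        apply Complex.ext _ h3
        exact (show (foldPi z).re = (foldPi w).re from congrArg Complex.re h5)
      · have h2 := hFle w hw h0
        have hz0 : 0 ≤ z.im := by
          by_contra hneg
          push Not at hneg
          have h1 := hFneg z hz hneg.le
          linarith [h1.1]
        rw [hFpos z hz0, hFpos w h0] at h
        exact hΨi ⟨hz, hz0⟩ ⟨hw, h0⟩ h
    intro z hz w hw h
    rcases le_total z.im w.im with h1 | h1
    · exact key z hz w hw h h1
    · exact (key w hw z hz h.symm h1).symm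
  have hFcc : F c = Ψ c := hFpos c hc0.ge
  have hFn : F '' closedBall c a ∈ 𝓝 (F c) := by
    rw [hFcc]
    have hK2 : IsCompact (Ψ '' (Q ∩ (ball c (a/2))ᶜ)) :=
      (hQc.inter_right isOpen_ball.isClosed_compl).image_of_continuousOn
        (hΨc.mono inter_subset_left)
    have hnot : Ψ c ∉ Ψ '' (Q ∩ (ball c (a/2))ᶜ) := by
      rintro ⟨q, ⟨hq, hq2⟩, h⟩
      have := hΨi hq hcQ h
      apply hq2; rw [this]; exact mem_ball_self (by linarith)
    have hV := hK2.isClosed.isOpen_compl.mem_nhds hnot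
    have hcont : ContinuousAt (fun w : ℂ => ((‖w‖⁻¹ : ℝ) : ℂ) * w) (Ψ c) := by
      have : ‖Ψ c‖ ≠ 0 := by rw [hΨc1]; norm_num
      fun_prop (disch := assumption)
    have hV2 : ∀ᶠ w in 𝓝 (Ψ c), ((‖w‖⁻¹ : ℝ) : ℂ) * w ∈ (Ψ '' (Q ∩ (ball c (a/2))ᶜ))ᶜ := by
      apply hcont.eventually_mem
      rw [hΨc1]; simpa using hV
    have hV3 : ∀ᶠ w in 𝓝 (Ψ c), ‖w‖ < 1 + a/2 := by
      apply continuous_norm.continuousAt.eventually_lt_const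
      change ‖Ψ c‖ < 1 + a/2
      rw [hΨc1]; linarith
    filter_upwards [hV2, hV3] with w hw2 hw3
    rcases le_or_gt ‖w‖ 1 with h | h
    · have : w ∈ Ψ '' Q := by rw [hΨim]; simpa using h
      obtain ⟨q, hq, rfl⟩ := this
      exact ⟨q, hq.1, hFpos q hq.2⟩
    · set v := ((‖w‖⁻¹ : ℝ) : ℂ) * w with hv
      have hv1 : ‖v‖ = 1 := by
        rw [hv, norm_mul, Complex.norm_real, norm_inv, norm_norm, inv_mul_cancel₀ (by linarith)]
      have : v ∈ Ψ '' Q := by rw [hΨim]; simp [hv1]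
      obtain ⟨q, hq, hqv⟩ := this
      have hqb : q ∈ ball c (a/2) := by
        by_contra hcon
        exact hw2 ⟨q, ⟨hq, hcon⟩, hqv⟩
      have hqi : q.im = 0 := by
        by_contra hcon
        have h0 : 0 < q.im := lt_of_le_of_ne hq.2 (Ne.symm hcon)
        have := hΨlt q (by rw [hQint]; exact ⟨ball_subset_ball (by linarith) hqb, h0⟩)
        rw [hqv, hv1] at this
        exact lt_irrefl _ this
      set z : ℂ := q - ((‖w‖ - 1 : ℝ) : ℂ) * Complex.I with hz
      have hzre : z.re = q.re := by simp [hz]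
      have hzim : z.im = 1 - ‖w‖ := by simp [hz, hqi]
      refine ⟨z, ?_, ?_⟩
      · rw [mem_closedBall]
        have h1 : dist z q ≤ a/2 := by
          rw [Complex.dist_eq, hz, sub_sub_cancel_left, norm_neg, norm_mul, Complex.norm_real,
            Complex.norm_I, Real.norm_eq_abs, abs_of_pos (by linarith)]
          linarith
        have h2 : dist q c < a/2 := hqb
        linarith [dist_triangle z q c]
      · simp only [hF]
        have h1 : foldPi z = q := by
          apply Complex.ext
          · exact hzre
          · simp only [foldPi]; rw [hzim, hqi, max_eq_right (by linarith)]
        rw [h1, hqv, hzim, max_eq_left (by linarith), hv, ← mul_assoc, ← Complex.ofReal_mul]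
        have : (1 + -(1 - ‖w‖)) * ‖w‖⁻¹ = 1 := by
          field_simp; ring
        rw [this]; simp
  obtain ⟨G0, hG0c, hG0s, hG0⟩ := exists_chart_of_compact (isCompact_closedBall c a) hFc hFi
    (by rw [interior_closedBall _ ha.ne']; exact mem_ball_self ha) hFn
  rw [interior_closedBall _ ha.ne'] at hG0s
  have hsrc : ∀ y, y ∈ (e.trans G0).source ↔ y ∈ e.source ∧ e y ∈ G0.source := by
    intro y; rw [e.trans_source]; rfl
  have hval : ∀ y, (e.trans G0) y = F (e y) := fun y => hG0 _
  have hev : ∀ y ∈ (e.trans G0).source \ B, (e.trans G0 : ℂ → ℂ) =ᶠ[𝓝 y] Φ ∧ y ∈ e.symm '' interior Q := by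
    have hin : ∀ y ∈ (e.trans G0).source \ B, (e.trans G0) y = Φ y ∧ e y ∈ interior Q := by
      rintro y ⟨hy, hyB⟩
      obtain ⟨hy1, hy2⟩ := (hsrc y).1 hy
      have him : 0 < (e y).im := by
        by_contra hcon; exact hyB ((he y hy1).2 (not_lt.1 hcon))
      have hyQ : e y ∈ interior Q := by rw [hQint]; exact ⟨hG0s hy2, him⟩
      refine ⟨?_, hyQ⟩
      rw [hval, hFpos _ him.le, hΨΦ _ hyQ, e.left_inv hy1]
    rintro y hy
    have hyQ := (hin y hy).2
    have hy1 := ((hsrc y).1 hy.1).1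
    refine ⟨?_, ⟨e y, hyQ, e.left_inv hy1⟩⟩
    have h1 := (e.continuousAt hy1).preimage_mem_nhds (isOpen_interior.mem_nhds hyQ)
    filter_upwards [h1, (e.trans G0).open_source.mem_nhds hy.1] with x hx hx2
    refine (hin x ⟨hx2, ?_⟩).1
    intro hxB
    have h2 := (he x ((hsrc x).1 hx2).1).1 hxB
    have h3 : e x ∈ interior Q := hx
    rw [hQint] at h3
    exact absurd h3.2 (not_lt.2 h2)
  refine ⟨e.trans G0, (hsrc p).2 ⟨hpe, hG0c⟩, ?_, ?_, ?_, ?_⟩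
  · rw [hval, ← hc, hFcc, hΨc1]
  · intro y hy
    obtain ⟨hy1, hy2⟩ := (hsrc y).1 hy
    rw [he y hy1, hval]
    constructor
    · intro h
      rw [(hFneg _ (ball_subset_closedBall (hG0s hy2)) h).1]; linarith
    · intro h
      by_contra hcon
      exact absurd h (not_le.2 (hFlt _ (hG0s hy2) (not_le.1 hcon)))
  · intro y hy
    obtain ⟨h1, h2⟩ := hev y hy
    exact ((hΦd.differentiableAt (hΩ.mem_nhds h2)).congr_of_eventuallyEq h1).differentiableWithinAt
  · intro y hy
    obtain ⟨h1, h2⟩ := hev y hy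
    rw [h1.deriv_eq]
    exact hΦn y h2

end OSCE
end

section
open Set Filter Metric Topology MeasureTheory

namespace OSCE

lemma ae_proj {ι F : Type*} [Fintype ι] [NormedAddCommGroup F] [NormedSpace ℝ F] [FiniteDimensional ℝ F]
    [MeasurableSpace F] [BorelSpace F] (ν : Measure F) [ν.IsAddHaarMeasure]
    (L : (ι → ℝ) →ₗ[ℝ] F) (hL : Function.Surjective L) {N : Set F} (hN : ν N = 0) :
    ∀ᵐ c : ι → ℝ, L c ∉ N := by
  have h1 : ∀ᵐ c : ι → ℝ, L c ∈ (toMeasurable ν N)ᶜ := by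
    rw [ae_comp_linearMap_mem_iff L _ ν hL (measurableSet_toMeasurable ν N).compl,
      ae_iff]
    simpa using hN
  filter_upwards [h1] with c hc h
  exact hc (subset_toMeasurable ν N h)

lemma ae_pair {ι : Type*} [Fintype ι] {i j : ι} (hij : i ≠ j) {T : Set ℂ} {u v : ℂ → ℝ}
    {u' v' : ℂ → ℂ →L[ℝ] ℝ} (hu : ∀ x ∈ T, HasFDerivAt u (u' x) x)
    (hv : ∀ x ∈ T, HasFDerivAt v (v' x) x) :
    ∀ᵐ c : ι → ℝ, ∀ x ∈ T, u x = c i → v x = c j →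
      u' x 1 * v' x Complex.I - u' x Complex.I * v' x 1 ≠ 0 := by
  classical
  set L : ℂ → ℂ →L[ℝ] ℂ := fun x =>
    Complex.equivRealProdCLM.symm.toContinuousLinearMap.comp ((u' x).prod (v' x)) with hL
  set T0 := {x ∈ T | u' x 1 * v' x Complex.I - u' x Complex.I * v' x 1 = 0} with hT0
  have hg : ∀ x ∈ T0, HasFDerivWithinAt (fun z => Complex.equivRealProdCLM.symm (u z, v z)) (L x) T0 x :=
    fun x hx => ((Complex.equivRealProdCLM.symm.toContinuousLinearMap.hasFDerivAt).comp x
      ((hu x hx.1).prodMk (hv x hx.1))).hasFDerivWithinAt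
  have hnull : volume ((fun z => Complex.equivRealProdCLM.symm (u z, v z)) '' T0) = 0 := by
    apply addHaar_image_eq_zero_of_det_fderivWithin_eq_zero volume hg
    intro x hx
    rw [det_complex]
    simpa [hL] using hx.2
  have := ae_proj volume (Complex.equivRealProdCLM.symm.toLinearMap ∘ₗ
    ((LinearMap.proj i : (ι → ℝ) →ₗ[ℝ] ℝ).prod (LinearMap.proj j))) (by
      intro z
      refine ⟨fun k => if k = i then z.re else z.im, ?_⟩
      apply Complex.ext <;> simp [hij.symm]) hnull
  filter_upwards [this] with c hc x hx h1 h2 h3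
  apply hc
  refine ⟨x, ⟨hx, h3⟩, ?_⟩
  simp [h1, h2]

lemma ae_triple {ι : Type*} [Fintype ι] {i j k : ι} (hij : i ≠ j) (hik : i ≠ k) (hjk : j ≠ k)
    {T : Set ℂ} {u v w : ℂ → ℝ}
    {u' v' w' : ℂ → ℂ →L[ℝ] ℝ} (hu : ∀ x ∈ T, HasFDerivAt u (u' x) x)
    (hv : ∀ x ∈ T, HasFDerivAt v (v' x) x) (hw : ∀ x ∈ T, HasFDerivAt w (w' x) x) :
    ∀ᵐ c : ι → ℝ, ∀ x ∈ T, u x = c i → v x = c j → w x = c k → False := by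
  classical
  set L : (ℂ × ℝ) → ((ℂ × ℝ) →L[ℝ] (ℂ × ℝ)) := fun x =>
    ((Complex.equivRealProdCLM.symm.toContinuousLinearMap.comp ((u' x.1).prod (v' x.1))).prod
      (w' x.1)).comp (ContinuousLinearMap.fst ℝ ℂ ℝ) with hL
  set f : ℂ × ℝ → ℂ × ℝ := fun z => (Complex.equivRealProdCLM.symm (u z.1, v z.1), w z.1) with hf
  have hg : ∀ x ∈ T ×ˢ (univ : Set ℝ), HasFDerivWithinAt f (L x) (T ×ˢ univ) x := by
    intro x hx
    have h1 := (Complex.equivRealProdCLM.symm.toContinuousLinearMap.hasFDerivAt).comp x.1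
      ((hu x.1 hx.1).prodMk (hv x.1 hx.1))
    exact ((h1.prodMk (hw x.1 hx.1)).comp x hasFDerivAt_fst).hasFDerivWithinAt
  have hnull : ((volume : Measure ℂ).prod (volume : Measure ℝ)) (f '' (T ×ˢ univ)) = 0 := by
    apply addHaar_image_eq_zero_of_det_fderivWithin_eq_zero _ hg
    intro x hx
    by_contra hcon
    have h1 : L x ((0 : ℂ), (1 : ℝ)) = L x 0 := by simp [hL]
    have h2 := (LinearMap.equivOfDetNeZero (L x : (ℂ × ℝ) →ₗ[ℝ] (ℂ × ℝ)) hcon).injective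
      (a₁ := ((0 : ℂ), (1 : ℝ))) (a₂ := 0) (by simpa using h1)
    have := congrArg Prod.snd h2
    simp at this
  have := ae_proj ((volume : Measure ℂ).prod (volume : Measure ℝ))
    ((Complex.equivRealProdCLM.symm.toLinearMap ∘ₗ
    ((LinearMap.proj i : (ι → ℝ) →ₗ[ℝ] ℝ).prod (LinearMap.proj j))).prod (LinearMap.proj k)) (by
      intro z
      refine ⟨fun l => if l = i then z.1.re else if l = j then z.1.im else z.2, ?_⟩
      refine Prod.ext (Complex.ext ?_ ?_) ?_ <;> simp [hij.symm, hik.symm, hjk.symm]) hnull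
  filter_upwards [this] with c hc x hx h1 h2 h3
  apply hc
  refine ⟨(x, 0), ⟨hx, mem_univ _⟩, ?_⟩
  simp [hf, h1, h2, h3]

lemma ae_gamma {ι : Type*} [Fintype ι] {i j : ι} (hij : i ≠ j) {T : Set ℂ} (hT : IsCompact T)
    {u v : ℂ → ℝ} (hu : ContinuousOn u T) (hv : ContinuousOn v T)
    (hc : ∀ c, {x ∈ T | u x = c}.Countable) :
    ∀ᵐ c : ι → ℝ, ∀ x ∈ T, u x = c i → v x = c j → False := by
  classical
  have hnull : (volume : Measure (ℝ × ℝ)) ((fun x => (u x, v x)) '' T) = 0 := by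
    rw [Measure.volume_eq_prod, Measure.measure_prod_null
      (hT.image_of_continuousOn (hu.prodMk hv)).measurableSet]
    refine Eventually.of_forall fun c => ?_
    refine ((hc c).image v).measure_zero _ |> measure_mono_null ?_
    rintro y ⟨x, hx, h⟩
    simp only [Prod.mk.injEq] at h
    exact ⟨x, ⟨hx, h.1⟩, h.2⟩
  rw [Measure.volume_eq_prod] at hnull
  have := ae_proj _ ((LinearMap.proj i : (ι → ℝ) →ₗ[ℝ] ℝ).prod (LinearMap.proj j)) (by
      intro z
      refine ⟨fun k => if k = i then z.1 else z.2, ?_⟩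
      apply Prod.ext <;> simp [hij.symm]) hnull
  filter_upwards [this] with c hc x hx h1 h2
  apply hc
  exact ⟨x, hx, by simp [h1, h2]⟩

lemma exists_of_ae {ι : Type*} [Fintype ι] {P : (ι → ℝ) → Prop} (h : ∀ᵐ c : ι → ℝ, P c)
    (a b : ι → ℝ) (hab : ∀ i, a i < b i) : ∃ c, P c ∧ ∀ i, c i ∈ Ioo (a i) (b i) := by
  have hd : Dense {c | P c} := Measure.dense_of_ae h
  obtain ⟨c, hc1, hc2⟩ := hd.inter_open_nonempty (univ.pi fun i => Ioo (a i) (b i))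
    (isOpen_set_pi finite_univ fun i _ => isOpen_Ioo)
    (univ_pi_nonempty_iff.2 fun i => nonempty_Ioo.2 (hab i))
  exact ⟨c, hc2, fun i => hc1 i (mem_univ i)⟩

end OSCE
end

section
open Set Filter Metric Topology MeasureTheory

namespace OSCE

lemma union_flat {ι : Type*} [Finite ι] {B : Set ℂ} (hBc : IsClosed B) {N S : ι → Set ℂ}
    (hNc : ∀ i, IsClosed (N i)) (hS : ∀ i, IsOpen (S i)) {u : ι → ℂ → ℝ}
    {u' : ι → ℂ → ℂ →L[ℝ] ℝ} {c : ι → ℝ} (hN : ∀ i, N i = {x ∈ S i | u i x ≤ c i})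
    (hu : ∀ i, ContinuousOn (u i) (S i))
    (hd : ∀ i, ∀ x ∈ S i \ B, HasStrictFDerivAt (u i) (u' i x) x)
    (hne : ∀ i, ∀ x ∈ S i \ B, u i x = c i → u' i x ≠ 0)
    (h2 : ∀ i j, i ≠ j → ∀ x ∈ (S i ∩ S j) \ B, u i x = c i → u j x = c j →
      u' i x 1 * u' j x Complex.I - u' i x Complex.I * u' j x 1 ≠ 0)
    (h3 : ∀ i j k, i ≠ j → i ≠ k → j ≠ k → ∀ x ∈ (S i ∩ S j ∩ S k) \ B, u i x = c i → u j x = c j →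
      u k x = c k → False)
    (hΓ : ∀ x ∈ frontier B, FlatAt B x)
    (hΓ1 : ∀ i, ∀ x ∈ frontier B, x ∈ S i → u i x = c i →
      (∃ k, x ∈ interior (N k)) ∨ FlatAt (B ∪ N i) x)
    (hΓ2 : ∀ i j, i ≠ j → ∀ x ∈ frontier B, x ∈ S i → x ∈ S j → u i x = c i → u j x = c j →
      ∃ k, x ∈ interior (N k)) :
    ∀ x ∈ frontier (B ∪ ⋃ i, N i), FlatAt (B ∪ ⋃ i, N i) x := by
  intro x hx
  have hcl : IsClosed (B ∪ ⋃ i, N i) := hBc.union (isClosed_iUnion_of_finite hNc)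
  have hxm : x ∈ B ∪ ⋃ i, N i := hcl.frontier_subset hx
  have hni : ∀ i, x ∉ interior (N i) := fun i h =>
    hx.2 (interior_mono ((subset_iUnion N i).trans subset_union_right) h)
  have hnk : ¬ ∃ k, x ∈ interior (N k) := fun ⟨k, hk⟩ => hni k hk
  have hT : ∀ i, x ∈ N i → x ∈ S i ∧ u i x = c i := by
    intro i hi
    have hi' := hi
    rw [hN i] at hi'
    refine ⟨hi'.1, ?_⟩
    by_contra hcon
    have hlt := lt_of_le_of_ne hi'.2 hcon
    apply hni i
    rw [mem_interior_iff_mem_nhds, hN i]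
    have hs := (hS i).mem_nhds hi'.1
    filter_upwards [hs, ((hu i).continuousAt hs).eventually_lt_const hlt] with y hy hy2
    exact ⟨hy, hy2.le⟩
  have hloc : ∀ᶠ y in 𝓝 x, ∀ i, x ∉ N i → y ∉ N i := by
    rw [eventually_all]
    intro i
    by_cases hi : x ∈ N i
    · exact Eventually.of_forall fun y h => absurd hi h
    · filter_upwards [(hNc i).isOpen_compl.mem_nhds hi] with y hy _ using hy
  by_cases hxB : x ∈ B
  · have hxf : x ∈ frontier B := by
      rw [hBc.frontier_eq]
      exact ⟨hxB, fun h => hx.2 (interior_mono subset_union_left h)⟩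
    by_cases hex : ∃ i, x ∈ N i
    · obtain ⟨i, hi⟩ := hex
      have huniq : ∀ j, j ≠ i → x ∉ N j := fun j hji hj =>
        hnk (hΓ2 j i hji x hxf (hT j hj).1 (hT i hi).1 (hT j hj).2 (hT i hi).2)
      have hfl := (hΓ1 i x hxf (hT i hi).1 (hT i hi).2).resolve_left hnk
      refine hfl.congr ?_
      filter_upwards [hloc] with y hy
      refine or_congr_right ?_
      rw [mem_iUnion]
      constructor
      · exact fun h => ⟨i, h⟩
      · rintro ⟨j, hj⟩
        by_cases hji : j = i
        · exact hji ▸ hj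
        · exact absurd hj (hy j (huniq j hji))
    · push Not at hex
      refine (hΓ x hxf).congr ?_
      filter_upwards [hloc] with y hy
      constructor
      · exact fun h => Or.inl h
      · rintro (h | h)
        · exact h
        · obtain ⟨j, hj⟩ := mem_iUnion.1 h
          exact absurd hj (hy j (hex j))
  · have hyB : ∀ᶠ y in 𝓝 x, y ∉ B := hBc.isOpen_compl.mem_nhds hxB
    obtain ⟨i, hi⟩ := mem_iUnion.1 (hxm.resolve_left hxB)
    have hTi := hT i hi
    have hsi := (hS i).mem_nhds hTi.1
    have hdi := (hd i x ⟨hTi.1, hxB⟩).sub_const (c i)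
    by_cases hex : ∃ j, j ≠ i ∧ x ∈ N j
    · obtain ⟨j, hji, hj⟩ := hex
      have hTj := hT j hj
      have hsj := (hS j).mem_nhds hTj.1
      have hdj := (hd j x ⟨hTj.1, hxB⟩).sub_const (c j)
      have huniq : ∀ k, k ≠ i → k ≠ j → x ∉ N k := fun k hki hkj hk =>
        h3 k i j hki hkj hji.symm x ⟨⟨⟨(hT k hk).1, hTi.1⟩, hTj.1⟩, hxB⟩ (hT k hk).2 hTi.2 hTj.2
      refine (flatAt_corner hdi hdj (h2 i j hji.symm x ⟨⟨hTi.1, hTj.1⟩, hxB⟩ hTi.2 hTj.2)).congr ?_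
      filter_upwards [hloc, hyB, hsi, hsj] with y hy hyB hyi hyj
      have e1 : y ∈ N i ↔ u i y - c i ≤ 0 := by
        rw [hN i, sub_nonpos]; exact ⟨fun h => h.2, fun h => ⟨hyi, h⟩⟩
      have e2 : y ∈ N j ↔ u j y - c j ≤ 0 := by
        rw [hN j, sub_nonpos]; exact ⟨fun h => h.2, fun h => ⟨hyj, h⟩⟩
      rw [← e1, ← e2]
      constructor
      · rintro (h | h)
        · exact Or.inr (mem_iUnion.2 ⟨i, h⟩)
        · exact Or.inr (mem_iUnion.2 ⟨j, h⟩)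
      · rintro (h | h)
        · exact absurd h hyB
        · obtain ⟨k, hk⟩ := mem_iUnion.1 h
          by_cases hki : k = i
          · exact Or.inl (hki ▸ hk)
          · by_cases hkj : k = j
            · exact Or.inr (hkj ▸ hk)
            · exact absurd hk (hy k (huniq k hki hkj))
    · push Not at hex
      refine (flatAt_smooth hdi (hne i x ⟨hTi.1, hxB⟩ hTi.2)).congr ?_
      filter_upwards [hloc, hyB, hsi] with y hy hyB hyi
      have e1 : y ∈ N i ↔ u i y - c i ≤ 0 := by
        rw [hN i, sub_nonpos]; exact ⟨fun h => h.2, fun h => ⟨hyi, h⟩⟩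
      rw [← e1]
      constructor
      · exact fun h => Or.inr (mem_iUnion.2 ⟨i, h⟩)
      · rintro (h | h)
        · exact absurd h hyB
        · obtain ⟨k, hk⟩ := mem_iUnion.1 h
          by_cases hki : k = i
          · exact hki ▸ hk
          · exact absurd hk (hy k (hex k hki))

/-- squared distance derivative -/
noncomputable def nd (w : ℂ) : ℂ →L[ℝ] ℝ := (2 * w.re) • Complex.reCLM + (2 * w.im) • Complex.imCLM

lemma hasStrictFDerivAt_normSq (w : ℂ) : HasStrictFDerivAt (fun z : ℂ => ‖z‖ ^ 2) (nd w) w := by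
  have h : (fun z : ℂ => ‖z‖ ^ 2) = fun z => z.re ^ 2 + z.im ^ 2 := by
    ext z; rw [← Complex.normSq_eq_norm_sq, Complex.normSq_apply]; ring
  rw [h]
  have h1 := (Complex.reCLM.hasStrictFDerivAt (x := w)).pow 2
  have h2 := (Complex.imCLM.hasStrictFDerivAt (x := w)).pow 2
  refine (h1.add h2).congr_fderiv ?_
  ext z
  simp [nd]

lemma nd_apply (w z : ℂ) : nd w z = 2 * (w.re * z.re + w.im * z.im) := by
  simp [nd]; ring

/-- circle–circle transversality -/
lemma flat_circles {ζ w : ℂ} {s : ℝ} (hζ : ‖ζ‖ = 1) (hs0 : 0 < s) (hs : s < 4) (hw : ‖w‖ = 1)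
    (hws : ‖w - ζ‖ ^ 2 = s) : FlatAt {z : ℂ | 1 ≤ ‖z‖ ∨ ‖z - ζ‖ ^ 2 ≤ s} w := by
  have hu : HasStrictFDerivAt (fun z : ℂ => 1 - ‖z‖ ^ 2) (-nd w) w :=
    (hasStrictFDerivAt_normSq w).const_sub 1
  have hv : HasStrictFDerivAt (fun z : ℂ => ‖z - ζ‖ ^ 2 - s) (nd (w - ζ)) w := by
    have h1 := (hasStrictFDerivAt_normSq (w - ζ)).comp w ((hasStrictFDerivAt_id (𝕜 := ℝ) w).sub_const ζ)
    exact h1.sub_const s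
  refine (flatAt_corner hu hv ?_).congr (Eventually.of_forall fun y => ?_)
  · simp only [neg_apply, nd_apply]
    have e1 : w.re ^ 2 + w.im ^ 2 = 1 := by
      have := Complex.sq_norm w; rw [hw, Complex.normSq_apply] at this; linarith
    have e2 : ζ.re ^ 2 + ζ.im ^ 2 = 1 := by
      have := Complex.sq_norm ζ; rw [hζ, Complex.normSq_apply] at this; linarith
    have e3 : (w.re - ζ.re) ^ 2 + (w.im - ζ.im) ^ 2 = s := by
      have := Complex.sq_norm (w - ζ); rw [hws, Complex.normSq_apply] at this
      simp at this; linarith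
    simp
    intro h
    have h4 : w.re * ζ.im - w.im * ζ.re = 0 := by nlinarith
    have h5 : (w.re * ζ.re + w.im * ζ.im) ^ 2 = 1 := by
      have : (w.re * ζ.re + w.im * ζ.im) ^ 2 + (w.re * ζ.im - w.im * ζ.re) ^ 2
        = (w.re ^ 2 + w.im ^ 2) * (ζ.re ^ 2 + ζ.im ^ 2) := by ring
      rw [h4, e1, e2] at this; linarith
    have h6 : 2 - 2 * (w.re * ζ.re + w.im * ζ.im) = s := by nlinarith
    nlinarith
  · simp only [mem_ofPred_eq, sub_nonpos]
    rw [one_le_sq_iff₀ (norm_nonneg y)]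

lemma circles_countable {ζ : ℂ} {s : ℝ} (hζ : ζ ≠ 0) : {w : ℂ | ‖w‖ = 1 ∧ ‖w - ζ‖ ^ 2 = s}.Finite := by
  -- such a point satisfies `conj ζ * w ^ 2 - (1 + ‖ζ‖ ^ 2 - s) * w + ζ = 0`
  set p : Polynomial ℂ := Polynomial.C (starRingEnd ℂ ζ) * Polynomial.X ^ 2
    - Polynomial.C ((1 + ‖ζ‖ ^ 2 - s : ℝ) : ℂ) * Polynomial.X + Polynomial.C ζ with hp
  have hp0 : p ≠ 0 := by
    intro h
    apply hζ
    have := congrArg (Polynomial.eval 0) h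
    simpa [hp] using this
  refine (Polynomial.finite_setOfPred_isRoot hp0).subset ?_
  rintro w ⟨h1, h2⟩
  have e1 : w * starRingEnd ℂ w = 1 := by
    rw [Complex.mul_conj, Complex.normSq_eq_norm_sq, h1]; simp
  have e2 : (w - ζ) * starRingEnd ℂ (w - ζ) = s := by
    rw [Complex.mul_conj, Complex.normSq_eq_norm_sq, h2]
  have e3 : ζ * starRingEnd ℂ ζ = ((‖ζ‖ ^ 2 : ℝ) : ℂ) := by
    rw [Complex.mul_conj, Complex.normSq_eq_norm_sq]
  change Polynomial.eval w p = 0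
  simp only [hp, Polynomial.eval_add, Polynomial.eval_sub, Polynomial.eval_mul, Polynomial.eval_C,
    Polynomial.eval_pow, Polynomial.eval_X]
  rw [map_sub] at e2
  push_cast at e3 ⊢
  linear_combination (-ζ) * e1 - w * e2 + w * e1 + w * e3

end OSCE
end

section
open Set Filter Metric Topology MeasureTheory

namespace OSCE

noncomputable def ud (G : ℂ → ℂ) (ζ x : ℂ) : ℂ →L[ℝ] ℝ :=
  (nd (G x - ζ)).comp ((ContinuousLinearMap.toSpanSingleton ℂ (deriv G x)).restrictScalars ℝ)

lemma ud_spec {G : ℂ → ℂ} {S : Set ℂ} (hS : IsOpen S) (hG : DifferentiableOn ℂ G S) (ζ : ℂ) {x : ℂ}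
    (hx : x ∈ S) : HasStrictFDerivAt (fun z => ‖G z - ζ‖ ^ 2) (ud G ζ x) x := by
  have h1 : AnalyticAt ℂ G x := (hG.analyticOnNhd hS) x hx
  have h2 : HasStrictFDerivAt G ((ContinuousLinearMap.toSpanSingleton ℂ (deriv G x)).restrictScalars ℝ) x :=
    h1.hasStrictDerivAt.hasStrictFDerivAt.restrictScalars ℝ
  exact (hasStrictFDerivAt_normSq (G x - ζ)).comp x (h2.sub_const ζ)

lemma ud_ne {G : ℂ → ℂ} {ζ x : ℂ} (hd : deriv G x ≠ 0) (h : G x ≠ ζ) : ud G ζ x ≠ 0 := by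
  intro h0
  have h1 : ud G ζ x ((G x - ζ) / deriv G x) = 0 := by rw [h0]; rfl
  have h2 : ud G ζ x ((G x - ζ) / deriv G x) = nd (G x - ζ) (G x - ζ) := by
    simp [ud, div_mul_cancel₀ _ hd]
  rw [h2, nd_apply] at h1
  apply h
  rw [← sub_eq_zero, ← Complex.normSq_eq_zero, Complex.normSq_apply]
  linarith

structure BC (B : Set ℂ) where
  G : OpenPartialHomeomorph ℂ ℂ
  ζ : ℂ
  a : ℝ
  ha : 0 < a
  hat : closedBall ζ a ⊆ G.target
  hd : DifferentiableOn ℂ G (G.source \ B)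
  hn : ∀ y ∈ G.source \ B, deriv G y ≠ 0

namespace BC
variable {B : Set ℂ} (b : BC B)

noncomputable def u (x : ℂ) : ℝ := ‖b.G x - b.ζ‖ ^ 2

def N (c : ℝ) : Set ℂ := {x ∈ b.G.source | b.u x ≤ c}

lemma u_cont : ContinuousOn b.u b.G.source := by
  have := b.G.continuousOn
  unfold u
  fun_prop

lemma N_eq {c : ℝ} (hc0 : 0 ≤ c) (hc : c ≤ b.a ^ 2) :
    b.N c = b.G.symm '' closedBall b.ζ (√c) ∧ closedBall b.ζ (√c) ⊆ b.G.target := by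
  have hsub : closedBall b.ζ (√c) ⊆ b.G.target := by
    refine (closedBall_subset_closedBall ?_).trans b.hat
    rw [Real.sqrt_le_left b.ha.le]; exact hc
  refine ⟨?_, hsub⟩
  ext x
  constructor
  · rintro ⟨h1, h2⟩
    refine ⟨b.G x, ?_, b.G.left_inv h1⟩
    rw [mem_closedBall, Complex.dist_eq]
    exact Real.le_sqrt_of_sq_le h2
  · rintro ⟨w, hw, rfl⟩
    refine ⟨b.G.map_target (hsub hw), ?_⟩
    unfold u
    rw [b.G.right_inv (hsub hw)]
    rw [mem_closedBall, Complex.dist_eq] at hw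
    calc ‖w - b.ζ‖ ^ 2 ≤ (√c) ^ 2 := by gcongr
      _ = c := Real.sq_sqrt hc0

lemma N_compact {c : ℝ} (hc0 : 0 ≤ c) (hc : c ≤ b.a ^ 2) : IsCompact (b.N c) := by
  obtain ⟨h1, h2⟩ := b.N_eq hc0 hc
  rw [h1]
  exact (isCompact_closedBall _ _).image_of_continuousOn (b.G.continuousOn_symm.mono h2)

lemma N_preconn {c : ℝ} (hc0 : 0 ≤ c) (hc : c ≤ b.a ^ 2) : IsPreconnected (b.N c) := by
  obtain ⟨h1, h2⟩ := b.N_eq hc0 hc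
  rw [h1]
  exact (convex_closedBall _ _).isPreconnected.image _ (b.G.continuousOn_symm.mono h2)

end BC

lemma bc_exists {B : Set ℂ} {p : ℂ} (hflat : FlatAt B p) (hp : p ∈ frontier B) :
    ∃ b : BC B, p ∈ b.G.source ∧ b.G p = b.ζ ∧ ‖b.ζ‖ = 1 ∧ b.a < 1 ∧
      ∀ y ∈ b.G.source, (y ∈ B ↔ 1 ≤ ‖b.G y‖) := by
  obtain ⟨G, h1, h2, h3, h4, h5⟩ := bdry_chart hflat hp
  obtain ⟨a, ha, hat⟩ := Metric.nhds_basis_closedBall.mem_iff.1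
    (G.open_target.mem_nhds (G.map_source h1))
  refine ⟨⟨G, G p, min a (1/2), by positivity,
    (closedBall_subset_closedBall (min_le_left _ _)).trans hat, h4, h5⟩, h1, rfl, h2, ?_, h3⟩
  exact lt_of_le_of_lt (min_le_right _ _) (by norm_num)

lemma frontier_norm {B : Set ℂ} (hB : IsClosed B) {G : OpenPartialHomeomorph ℂ ℂ}
    (h : ∀ y ∈ G.source, (y ∈ B ↔ 1 ≤ ‖G y‖)) {x : ℂ} (hx : x ∈ frontier B) (hxs : x ∈ G.source) :
    ‖G x‖ = 1 := by
  have h1 := (h x hxs).1 (hB.frontier_subset hx)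
  by_contra hcon
  have h2 : 1 < ‖G x‖ := lt_of_le_of_ne h1 (Ne.symm hcon)
  apply hx.2
  rw [mem_interior_iff_mem_nhds]
  filter_upwards [G.open_source.mem_nhds hxs,
    (G.continuousAt hxs).norm.eventually_const_lt h2] with y hy hy2
  exact (h y hy).2 hy2.le

noncomputable def discBC (B : Set ℂ) (a : ℝ) (ha : 0 < a) : BC B where
  G := OpenPartialHomeomorph.refl ℂ
  ζ := 0
  a := a
  ha := ha
  hat := subset_univ _
  hd := differentiableOn_id
  hn := by
    intro y _
    have : deriv (fun x : ℂ => x) y ≠ 0 := by simp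
    exact this

lemma planar {B : Set ℂ} (hB : IsClosed B) (hΓ : ∀ x ∈ frontier B, FlatAt B x) {r0 : ℝ} (hr0 : 0 < r0)
    (hmeet : (closedBall 0 r0 ∩ B).Nonempty) :
    ∃ X, IsCompact X ∧ closedBall 0 r0 ⊆ X ∧ (∀ x ∈ frontier (B ∪ X), FlatAt (B ∪ X) x) ∧
      ∀ x ∈ X, ∃ s ⊆ X, IsPreconnected s ∧ x ∈ s ∧ (s ∩ B).Nonempty := by
  classical
  choose bc hps hpζ hζ1 ha1 hbB using fun p : frontier B => bc_exists (hΓ p p.2) p.2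
  set r1 := r0 + 1 with hr1
  set W : frontier B → Set ℂ := fun p => (bc p).G.source ∩ (bc p).u ⁻¹' Iio ((bc p).a ^ 2 / 4) with hW
  have hWo : ∀ p, IsOpen (W p) := fun p =>
    (bc p).u_cont.isOpen_inter_preimage (bc p).G.open_source isOpen_Iio
  have hup : ∀ p, (bc p).u p = 0 := by intro p; simp [BC.u, hpζ p]
  have hpW : ∀ p : frontier B, (p : ℂ) ∈ W p := by
    intro p
    refine ⟨hps p, ?_⟩
    have := (bc p).ha
    rw [mem_preimage, hup p]
    exact (by positivity : (0:ℝ) < (bc p).a ^ 2 / 4)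
  obtain ⟨t, ht⟩ := ((isCompact_sphere (0:ℂ) r1).inter_left (isClosed_frontier (s := B))).elim_finite_subcover
    W hWo (fun x hx => mem_iUnion.2 ⟨⟨x, hx.1⟩, hpW ⟨x, hx.1⟩⟩)
  -- closeness of the radius
  obtain ⟨δ, hδ, hδW⟩ : ∃ δ, 0 < δ ∧ ∀ x ∈ frontier B, r1 < ‖x‖ → ‖x‖ < r1 + δ → ∃ p ∈ t, x ∈ W p := by
    have hZ : IsCompact ((frontier B ∩ closedBall 0 (r1 + 1)) \ ⋃ p ∈ t, W p) :=
      ((isCompact_closedBall (0:ℂ) (r1+1)).inter_left isClosed_frontier).diff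
        (isOpen_biUnion fun p _ => hWo p)
    have hcl := (hZ.image continuous_norm).isClosed
    have hnot : r1 ∉ norm '' ((frontier B ∩ closedBall (0:ℂ) (r1 + 1)) \ ⋃ p ∈ t, W p) := by
      rintro ⟨x, ⟨⟨hx1, -⟩, hx2⟩, hx3⟩
      exact hx2 (ht ⟨hx1, by simpa using hx3⟩)
    obtain ⟨ε, hε, hball⟩ := Metric.mem_nhds_iff.1 (hcl.isOpen_compl.mem_nhds hnot)
    refine ⟨min ε 1, by positivity, ?_⟩
    intro x hx h1 h2
    by_contra hcon
    have hmin1 := min_le_left ε 1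
    have hmin2 := min_le_right ε 1
    refine hball (a := ‖x‖) ?_ ⟨x, ⟨⟨hx, ?_⟩, ?_⟩, rfl⟩
    · rw [mem_ball, Real.dist_eq, abs_of_pos (by linarith)]; linarith
    · simp; linarith
    · simpa using hcon
  have hr1p : 0 < r1 := by linarith
  set b : Option t → BC B := fun o => o.elim (discBC B (r1 + δ) (by positivity)) (fun p => bc p) with hb
  set lo : Option t → ℝ := fun o => o.elim (r1 ^ 2) (fun p => (bc p).a ^ 2 / 4) with hlo
  have hlo_lt : ∀ o, lo o < (b o).a ^ 2 := by
    rintro (_ | p)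
    · change r1 ^ 2 < (r1 + δ) ^ 2
      nlinarith
    · change (bc p).a ^ 2 / 4 < (bc p).a ^ 2
      have := (bc p).ha
      nlinarith
  have hlo_pos : ∀ o, 0 < lo o := by
    rintro (_ | p)
    · change 0 < r1 ^ 2
      positivity
    · change 0 < (bc p).a ^ 2 / 4
      have := (bc p).ha
      positivity
  have hSo : ∀ o, IsOpen ((b o).G.source \ B) := fun o => (b o).G.open_source.sdiff hB
  have hder : ∀ o, ∀ x ∈ (b o).G.source \ B, HasStrictFDerivAt (b o).u (ud (b o).G (b o).ζ x) x :=
    fun o x hx => ud_spec (hSo o) (b o).hd (b o).ζ hx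
  have hae2 : ∀ᵐ c : Option t → ℝ, ∀ i j, i ≠ j → ∀ x ∈ ((b i).G.source ∩ (b j).G.source) \ B,
      (b i).u x = c i → (b j).u x = c j →
      ud (b i).G (b i).ζ x 1 * ud (b j).G (b j).ζ x Complex.I
        - ud (b i).G (b i).ζ x Complex.I * ud (b j).G (b j).ζ x 1 ≠ 0 := by
    rw [ae_all_iff]; intro i
    rw [ae_all_iff]; intro j
    by_cases hij : i = j
    · exact Eventually.of_forall fun c h => absurd hij h
    · filter_upwards [ae_pair hij (fun x hx => (hder i x ⟨hx.1.1, hx.2⟩).hasFDerivAt)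
        (fun x hx => (hder j x ⟨hx.1.2, hx.2⟩).hasFDerivAt)
        (T := ((b i).G.source ∩ (b j).G.source) \ B)] with c hc _ using hc
  have hae3 : ∀ᵐ c : Option t → ℝ, ∀ i j k, i ≠ j → i ≠ k → j ≠ k →
      ∀ x ∈ ((b i).G.source ∩ (b j).G.source ∩ (b k).G.source) \ B,
      (b i).u x = c i → (b j).u x = c j → (b k).u x = c k → False := by
    rw [ae_all_iff]; intro i
    rw [ae_all_iff]; intro j
    rw [ae_all_iff]; intro k
    by_cases h : i ≠ j ∧ i ≠ k ∧ j ≠ k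
    · filter_upwards [ae_triple h.1 h.2.1 h.2.2
        (fun x hx => (hder i x ⟨hx.1.1.1, hx.2⟩).hasFDerivAt)
        (fun x hx => (hder j x ⟨hx.1.1.2, hx.2⟩).hasFDerivAt)
        (fun x hx => (hder k x ⟨hx.1.2, hx.2⟩).hasFDerivAt)
        (T := ((b i).G.source ∩ (b j).G.source ∩ (b k).G.source) \ B)] with c hc _ _ _ using hc
    · exact Eventually.of_forall fun c h1 h2 h3 => absurd ⟨h1, h2, h3⟩ h
  have haeΓ : ∀ᵐ c : Option t → ℝ, ∀ p q : t, p ≠ q →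
      ∀ x ∈ frontier B ∩ (bc p).N ((bc p).a ^ 2) ∩ (bc q).N ((bc q).a ^ 2),
      (bc p).u x = c (some p) → (bc q).u x = c (some q) → False := by
    rw [ae_all_iff]; intro p
    rw [ae_all_iff]; intro q
    by_cases hpq : p = q
    · exact Eventually.of_forall fun c h => absurd hpq h
    · have hcomp : ∀ p : t, IsCompact ((bc p).N ((bc p).a ^ 2)) :=
        fun p => (bc p).N_compact (sq_nonneg _) le_rfl
      have hcount : ∀ c, {x ∈ frontier B ∩ (bc p).N ((bc p).a ^ 2) ∩ (bc q).N ((bc q).a ^ 2) |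
          (bc p).u x = c}.Countable := by
        intro c
        have hfin := circles_countable (ζ := (bc p).ζ) (s := c) (by
          intro h; have := hζ1 p; rw [h] at this; simp at this)
        refine (hfin.countable.image (bc p).G.symm).mono ?_
        rintro x ⟨⟨⟨hx1, hx2⟩, -⟩, hx3⟩
        exact ⟨(bc p).G x, ⟨frontier_norm hB (hbB p) hx1 hx2.1, hx3⟩, (bc p).G.left_inv hx2.1⟩
      filter_upwards [ae_gamma (i := some p) (j := some q) (by simpa using hpq)
        (T := frontier B ∩ (bc p).N ((bc p).a ^ 2) ∩ (bc q).N ((bc q).a ^ 2))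
        (((hcomp p).inter_left isClosed_frontier).inter_right (hcomp q).isClosed)
        (u := (bc p).u) (v := (bc q).u)
        ((bc p).u_cont.mono fun x hx => hx.1.2.1) ((bc q).u_cont.mono fun x hx => hx.2.1) hcount]
        with c hc _ using hc
  obtain ⟨c, ⟨hc2, hc3, hcΓ⟩, hcI⟩ := exists_of_ae (hae2.and (hae3.and haeΓ)) lo
    (fun o => (b o).a ^ 2) hlo_lt
  have hc0 : ∀ o, 0 < c o := fun o => (hlo_pos o).trans (hcI o).1
  have hcl : ∀ o, c o ≤ (b o).a ^ 2 := fun o => (hcI o).2.le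
  have hNcp : ∀ o, IsCompact ((b o).N (c o)) := fun o => (b o).N_compact (hc0 o).le (hcl o)
  have hWint : ∀ p : t, W p ⊆ interior ((b (some p)).N (c (some p))) := by
    intro p
    rw [(hWo p).subset_interior_iff]
    rintro x ⟨hx1, hx2⟩
    have h1 : (bc p).u x < (bc p).a ^ 2 / 4 := hx2
    have h2 : (bc p).a ^ 2 / 4 < c (some p) := (hcI (some p)).1
    exact ⟨hx1, (h1.trans h2).le⟩
  have hnone : ∀ x ∈ frontier B, (b none).u x = c none → ∃ k, x ∈ interior ((b k).N (c k)) := by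
    intro x hx h
    have e1 : (b none).u x = ‖x‖ ^ 2 := by
      change ‖x - 0‖ ^ 2 = ‖x‖ ^ 2
      rw [sub_zero]
    have l1 : r1 ^ 2 < c none := (hcI none).1
    have l2 : c none < (r1 + δ) ^ 2 := (hcI none).2
    rw [← h, e1] at l1 l2
    obtain ⟨p, hp, hxp⟩ := hδW x hx (lt_of_pow_lt_pow_left₀ 2 (norm_nonneg _) l1)
      (lt_of_pow_lt_pow_left₀ 2 (by positivity) l2)
    exact ⟨some ⟨p, hp⟩, hWint ⟨p, hp⟩ hxp⟩
  have hX := union_flat hB (N := fun o => (b o).N (c o)) (S := fun o => (b o).G.source)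
    (u := fun o => (b o).u) (u' := fun o => ud (b o).G (b o).ζ) (c := c)
    (fun o => (hNcp o).isClosed) (fun o => (b o).G.open_source) (fun o => rfl)
    (fun o => (b o).u_cont) hder
    (by
      intro o x hx hxc
      apply ud_ne ((b o).hn x hx)
      intro h
      have : (b o).u x = 0 := by simp [BC.u, h]
      linarith [hc0 o])
    hc2 hc3 hΓ
    (by
      rintro (_ | p) x hx hxs hxc
      · exact Or.inl (hnone x hx hxc)
      · right
        have hxs' : x ∈ (bc p).G.source := hxs
        have hxc' : ‖(bc p).G x - (bc p).ζ‖ ^ 2 = c (some p) := hxc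
        have l2 : c (some p) < (bc p).a ^ 2 := (hcI (some p)).2
        have l3 := ha1 p
        have l4 := (bc p).ha
        refine FlatAt.of_chart (bc p).G hxs' (flat_circles (hζ1 p) (hc0 (some p)) (by nlinarith)
          (frontier_norm hB (hbB p) hx hxs') hxc') ?_
        intro y hy
        refine or_congr (hbB p y hy) ?_
        exact ⟨fun h => h.2, fun h => ⟨hy, h⟩⟩)
    (by
      rintro (_ | p) (_ | q) hij x hx h1 h2 h3 h4
      · exact absurd rfl hij
      · exact hnone x hx h3
      · exact hnone x hx h4
      · exfalso
        refine hcΓ p q (fun h => hij (by rw [h])) x ⟨⟨hx, h1, ?_⟩, h2, ?_⟩ h3 h4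
        · exact (le_of_eq h3).trans (hcl (some p))
        · exact (le_of_eq h4).trans (hcl (some q)))
  refine ⟨⋃ o, (b o).N (c o), isCompact_iUnion hNcp, ?_, hX, ?_⟩
  · refine Subset.trans ?_ (subset_iUnion _ none)
    intro x hx
    refine ⟨mem_univ _, ?_⟩
    change ‖x - 0‖ ^ 2 ≤ c none
    rw [sub_zero]
    have l1 : r1 ^ 2 < c none := (hcI none).1
    have l2 : ‖x‖ ≤ r0 := by simpa using hx
    nlinarith [norm_nonneg x]
  · intro x hx
    obtain ⟨o, ho⟩ := mem_iUnion.1 hx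
    refine ⟨(b o).N (c o), subset_iUnion (fun o => (b o).N (c o)) o,
      (b o).N_preconn (hc0 o).le (hcl o), ho, ?_⟩
    rcases o with _ | p
    · obtain ⟨y, hy1, hy2⟩ := hmeet
      refine ⟨y, ⟨mem_univ _, ?_⟩, hy2⟩
      change ‖y - 0‖ ^ 2 ≤ c none
      rw [sub_zero]
      have l1 : r1 ^ 2 < c none := (hcI none).1
      have l2 : ‖y‖ ≤ r0 := by simpa using hy1
      nlinarith [norm_nonneg y]
    · refine ⟨(p : frontier B), ⟨hps p, ?_⟩, hB.frontier_subset (p : frontier B).2⟩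
      change (bc p).u _ ≤ _
      rw [hup]
      exact (hc0 (some p)).le

end OSCE
end

section
open Set Filter Metric Topology MeasureTheory

namespace OSCE

def Good {M : Type*} [TopologicalSpace M] (A : Set M) : Prop :=
  IsCompact A ∧ IsConnected A ∧ ∀ x ∈ frontier A, FlatAt A x

lemma flat_pull {M : Type*} [TopologicalSpace M] {i : ℂ → M} (hi : IsOpenEmbedding i) {A : Set M} {z : ℂ}
    (h : FlatAt A (i z)) : FlatAt (i ⁻¹' A) z := by
  refine FlatAt.of_chart (hi.toOpenPartialHomeomorph i) (mem_univ z) (A' := A) (by simpa using h) ?_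
  intro y _
  simp

lemma flat_push {M : Type*} [TopologicalSpace M] {i : ℂ → M} (hi : IsOpenEmbedding i) {A : Set M} {z : ℂ}
    (h : FlatAt (i ⁻¹' A) z) : FlatAt A (i z) := by
  have hl : ∀ w, (hi.toOpenPartialHomeomorph i).symm (i w) = w := fun w => by
    simpa using (hi.toOpenPartialHomeomorph i).left_inv (x := w) (mem_univ w)
  refine FlatAt.of_chart (hi.toOpenPartialHomeomorph i).symm (A' := i ⁻¹' A) (by simp) (by rwa [hl]) ?_
  intro y hy
  have hy' : y ∈ range i := by simpa using hy
  obtain ⟨w, rfl⟩ := hy'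
  rw [hl]; rfl

lemma step {M : Type*} [TopologicalSpace M] [T2Space M] {i : ℂ → M} (hi : IsOpenEmbedding i)
    {A : Set M} (hA : Good A) (hm : (i '' closedBall 0 1 ∩ A).Nonempty) :
    ∃ A', Good A' ∧ A ⊆ A' ∧ i '' closedBall 0 1 ⊆ A' := by
  obtain ⟨hc, hconn, hfl⟩ := hA
  have hfr : ∀ S : Set M, i ⁻¹' frontier S = frontier (i ⁻¹' S) :=
    hi.isOpenMap.preimage_frontier_eq_frontier_preimage hi.continuous
  obtain ⟨X, hX, hX1, hX2, hX3⟩ := planar (B := i ⁻¹' A) (hc.isClosed.preimage hi.continuous)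
    (by
      intro z hz
      rw [← hfr] at hz
      exact flat_pull hi (hfl _ hz)) zero_lt_one
    (by
      obtain ⟨_, ⟨z, hz, rfl⟩, h⟩ := hm
      exact ⟨z, hz, h⟩)
  have hXc : IsCompact (i '' X) := hX.image hi.continuous
  have hpre : i ⁻¹' (A ∪ i '' X) = i ⁻¹' A ∪ X := by
    rw [preimage_union, preimage_image_eq _ hi.injective]
  have hcl : IsClosed (A ∪ i '' X) := hc.isClosed.union hXc.isClosed
  refine ⟨A ∪ i '' X, ⟨hc.union hXc, ⟨hconn.nonempty.mono subset_union_left, ?_⟩, ?_⟩,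
    subset_union_left, (image_mono hX1).trans subset_union_right⟩
  · obtain ⟨x0, hx0⟩ := hconn.nonempty
    apply isPreconnected_of_forall x0
    rintro y (hy | ⟨z, hz, rfl⟩)
    · exact ⟨A, subset_union_left, hx0, hy, hconn.isPreconnected⟩
    · obtain ⟨s, hs, hs2, hzs, ⟨w, hw1, hw2⟩⟩ := hX3 z hz
      exact ⟨A ∪ i '' s, union_subset_union_right _ (image_mono hs), Or.inl hx0,
        Or.inr (mem_image_of_mem i hzs), IsPreconnected.union (i w) hw2 (mem_image_of_mem i hw1)
          hconn.isPreconnected (hs2.image i hi.continuous.continuousOn)⟩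
  · intro y hy
    by_cases hr : y ∈ range i
    · obtain ⟨z, rfl⟩ := hr
      apply flat_push hi
      rw [hpre]
      apply hX2
      rw [← hpre, ← hfr]
      exact hy
    · have hyX : y ∉ i '' X := fun h => hr (image_subset_range _ _ h)
      have hyA : y ∈ A := (hcl.frontier_subset hy).resolve_right hyX
      have hyf : y ∈ frontier A := by
        rw [hc.isClosed.frontier_eq]
        exact ⟨hyA, fun h => hy.2 (interior_mono subset_union_left h)⟩
      refine (hfl y hyf).congr ?_
      filter_upwards [hXc.isClosed.isOpen_compl.mem_nhds hyX] with x hx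
      exact ⟨Or.inl, fun h => h.resolve_right hx⟩

lemma good_disc {M : Type*} [TopologicalSpace M] [T2Space M] {i : ℂ → M} (hi : IsOpenEmbedding i) :
    Good (i '' closedBall 0 1) := by
  have hK : IsCompact (i '' closedBall 0 1) := (isCompact_closedBall _ _).image hi.continuous
  refine ⟨hK, ?_, ?_⟩
  · refine ⟨⟨i 0, mem_image_of_mem i (by simp)⟩, ?_⟩
    exact (convex_closedBall _ _).isPreconnected.image i hi.continuous.continuousOn
  · intro x hx
    obtain ⟨z, hz, rfl⟩ := hK.isClosed.frontier_subset hx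
    have h1 : z ∈ i ⁻¹' frontier (i '' closedBall 0 1) := hx
    rw [hi.isOpenMap.preimage_frontier_eq_frontier_preimage hi.continuous,
      preimage_image_eq _ hi.injective, frontier_closedBall _ one_ne_zero] at h1
    apply flat_push hi
    rw [preimage_image_eq _ hi.injective]
    have h2 : ‖z‖ = 1 := by simpa using h1
    have := flatAt_smooth ((hasStrictFDerivAt_normSq z).sub_const 1) (by
      intro h0
      have h3 : nd z z = 0 := by rw [h0]; rfl
      rw [nd_apply] at h3
      have := Complex.sq_norm z
      rw [h2, Complex.normSq_apply] at this
      linarith)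
    refine this.congr (Eventually.of_forall fun y => ?_)
    change ‖y‖ ^ 2 - 1 ≤ 0 ↔ y ∈ closedBall 0 1
    rw [sub_nonpos, sq_le_one_iff₀ (norm_nonneg y)]
    simp

lemma exists_emb {M : Type*} [TopologicalSpace M]
    (hsurf : ∀ x : M, ∃ U : Set M, IsOpen U ∧ x ∈ U ∧ Nonempty (U ≃ₜ (ℝ × ℝ))) (x : M) :
    ∃ i : ℂ → M, IsOpenEmbedding i ∧ i 0 = x := by
  obtain ⟨U, hU, hx, ⟨φ⟩⟩ := hsurf x
  set ψ : ℂ ≃ₜ U := Complex.equivRealProdCLM.toHomeomorph.trans φ.symm with hψ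
  refine ⟨fun z => (ψ (z + ψ.symm ⟨x, hx⟩) : M), ?_, by simp⟩
  exact hU.isOpenEmbedding_subtypeVal.comp
    (ψ.isOpenEmbedding.comp (Homeomorph.addRight (ψ.symm ⟨x, hx⟩)).isOpenEmbedding)


lemma disc_nhds {M : Type*} [TopologicalSpace M] {i : M → ℂ → M} (hi : ∀ x, IsOpenEmbedding (i x)) (hi0 : ∀ x, i x 0 = x)
    (x : M) : i x '' ball 0 1 ∈ 𝓝 x :=
  ((hi x).isOpenMap _ isOpen_ball).mem_nhds ⟨0, by simp, hi0 x⟩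

lemma disc_int {M : Type*} [TopologicalSpace M] {i : M → ℂ → M} (hi : ∀ x, IsOpenEmbedding (i x))
    {A : Set M} {x : M} (h : i x '' closedBall 0 1 ⊆ A) : i x '' ball 0 1 ⊆ interior A :=
  interior_maximal ((image_mono ball_subset_closedBall).trans h) ((hi x).isOpenMap _ isOpen_ball)

lemma good_int {M : Type*} [TopologicalSpace M] [T2Space M] {i : M → ℂ → M} (hi : ∀ x, IsOpenEmbedding (i x)) (hi0 : ∀ x, i x 0 = x)
    {A : Set M} (hA : Good A) : ∃ A', Good A' ∧ A ⊆ interior A' := by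
  have key : ∀ t : Finset M, (↑t : Set M) ⊆ A → ∃ A', Good A' ∧ A ⊆ A' ∧
      ∀ x ∈ t, i x '' closedBall 0 1 ⊆ A' := by
    classical
    intro t
    induction t using Finset.induction_on with
    | empty => exact fun _ => ⟨A, hA, Subset.rfl, by simp⟩
    | insert x t hx ih =>
      intro ht
      obtain ⟨A1, h1, h2, h3⟩ := ih (fun y hy => ht (by simp [Finset.mem_coe.1 hy]))
      obtain ⟨A2, h4, h5, h6⟩ := step (hi x) h1 ⟨x, ⟨0, by simp, hi0 x⟩, h2 (ht (by simp))⟩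
      refine ⟨A2, h4, h2.trans h5, ?_⟩
      intro y hy
      rcases Finset.mem_insert.1 hy with rfl | hy
      · exact h6
      · exact (h3 y hy).trans h5
  obtain ⟨t, ht, htA⟩ := hA.1.elim_nhds_subcover (fun x => i x '' ball 0 1)
    (fun x _ => disc_nhds hi hi0 x)
  obtain ⟨A', h1, h2, h3⟩ := key t ht
  refine ⟨A', h1, fun y hy => ?_⟩
  obtain ⟨x, hx, hyx⟩ := mem_iUnion₂.1 (htA hy)
  exact disc_int hi (h3 x hx) hyx

lemma good_reach {M : Type*} [TopologicalSpace M] [T2Space M] [ConnectedSpace M] {i : M → ℂ → M} (hi : ∀ x, IsOpenEmbedding (i x)) (hi0 : ∀ x, i x 0 = x)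
    {A : Set M} (hA : Good A) (x : M) : ∃ A', Good A' ∧ A ⊆ A' ∧ x ∈ interior A' := by
  set R := {x : M | ∃ A', Good A' ∧ A ⊆ A' ∧ x ∈ interior A'} with hR
  have ho : IsOpen R := by
    rw [isOpen_iff_mem_nhds]
    rintro y ⟨A', h1, h2, h3⟩
    filter_upwards [isOpen_interior.mem_nhds h3] with z hz
    exact ⟨A', h1, h2, hz⟩
  have hc : IsClosed R := by
    rw [← closure_subset_iff_isClosed]
    intro y hy
    obtain ⟨z, hz1, A1, h1, h2, h3⟩ := mem_closure_iff_nhds.1 hy _ (disc_nhds hi hi0 y)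
    obtain ⟨A2, h4, h5, h6⟩ := step (hi y) h1
      ⟨z, image_mono ball_subset_closedBall hz1, interior_subset h3⟩
    exact ⟨A2, h4, h2.trans h5, disc_int hi h6 ⟨0, by simp, hi0 y⟩⟩
  have hne : R.Nonempty := by
    obtain ⟨y, hy⟩ := hA.2.1.nonempty
    obtain ⟨A', h1, h2⟩ := good_int hi hi0 hA
    exact ⟨y, A', h1, h2.trans interior_subset, h2 hy⟩
  have : x ∈ R := by rw [IsClopen.eq_univ ⟨hc, ho⟩ hne]; trivial
  exact this

lemma good_compact {M : Type*} [TopologicalSpace M] [T2Space M] [ConnectedSpace M] {i : M → ℂ → M} (hi : ∀ x, IsOpenEmbedding (i x)) (hi0 : ∀ x, i x 0 = x)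
    {C : Set M} (hC : IsCompact C) :
    ∀ A : Set M, Good A → ∃ A', Good A' ∧ A ⊆ A' ∧ C ⊆ interior A' := by
  refine IsCompact.induction_on (p := fun C => ∀ A : Set M, Good A →
    ∃ A', Good A' ∧ A ⊆ A' ∧ C ⊆ interior A') hC ?_ ?_ ?_ ?_
  · exact fun A hA => ⟨A, hA, Subset.rfl, empty_subset _⟩
  · intro s t hst ht
    intro A hA
    obtain ⟨A', h1, h2, h3⟩ := ht A hA
    exact ⟨A', h1, h2, hst.trans h3⟩
  · intro s t hs ht
    intro A hA
    obtain ⟨A1, h1, h2, h3⟩ := hs A hA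
    obtain ⟨A2, h4, h5, h6⟩ := ht A1 h1
    exact ⟨A2, h4, h2.trans h5, union_subset (h3.trans (interior_mono h5)) h6⟩
  · intro x hx
    refine ⟨i x '' ball 0 1, mem_nhdsWithin_of_mem_nhds (disc_nhds hi hi0 x), ?_⟩
    intro A hA
    obtain ⟨A1, h1, h2, h3⟩ := good_reach hi hi0 hA x
    obtain ⟨A2, h4, h5, h6⟩ := step (hi x) h1 ⟨x, ⟨0, by simp, hi0 x⟩, interior_subset h3⟩
    exact ⟨A2, h4, h2.trans h5, disc_int hi h6⟩

lemma good_exhaust {M : Type*} [TopologicalSpace M] [T2Space M] [ConnectedSpace M] {i : M → ℂ → M} (hi : ∀ x, IsOpenEmbedding (i x)) (hi0 : ∀ x, i x 0 = x)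
    [SecondCountableTopology M] : ∃ K : ℕ → Set M, (∀ n, Good (K n)) ∧
    (∀ n, K n ⊆ interior (K (n + 1))) ∧ (⋃ n, K n) = univ := by
  have : WeaklyLocallyCompactSpace M := ⟨fun x => ⟨i x '' closedBall 0 1,
    (isCompact_closedBall _ _).image (hi x).continuous,
    mem_of_superset (disc_nhds hi hi0 x) (image_mono ball_subset_closedBall)⟩⟩
  have : LocallyCompactSpace M := inferInstance
  have : SigmaCompactSpace M := inferInstance
  have hnext : ∀ (n : ℕ) (A : {A : Set M // Good A}), ∃ A' : {A : Set M // Good A},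
      A.1 ∪ compactCovering M n ⊆ interior A'.1 := by
    rintro n ⟨A, hA⟩
    obtain ⟨A', h1, -, h3⟩ := good_compact hi hi0 (hA.1.union (isCompact_compactCovering M n)) A hA
    exact ⟨⟨A', h1⟩, h3⟩
  choose f hf using hnext
  obtain ⟨x0⟩ : Nonempty M := inferInstance
  set K : ℕ → {A : Set M // Good A} := fun n => Nat.rec ⟨_, good_disc (hi x0)⟩ (fun n A => f n A) n with hK
  have hs : ∀ n, K (n + 1) = f n (K n) := fun n => rfl
  refine ⟨fun n => (K n).1, fun n => (K n).2, ?_, ?_⟩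
  · intro n
    change (K n).1 ⊆ interior (K (n + 1)).1
    rw [hs]
    exact subset_union_left.trans (hf n (K n))
  · rw [eq_univ_iff_forall]
    intro x
    obtain ⟨n, hn⟩ := exists_mem_compactCovering x
    refine mem_iUnion.2 ⟨n + 1, ?_⟩
    change x ∈ (K (n + 1)).1
    rw [hs]
    exact interior_subset (hf n (K n) (Or.inr hn))

lemma local_model {M T : Type*} [TopologicalSpace M] [TopologicalSpace T] {A : Set M} {x : A} {k : T → M}
    (hk : IsEmbedding k) {V : Set M} (hV : IsOpen V) (hr : range k = A ∩ V) (hx : (x : M) ∈ V) :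
    ∃ U : Set A, IsOpen U ∧ x ∈ U ∧ Nonempty (U ≃ₜ T) := by
  have hkA : ∀ t, k t ∈ A := fun t => (hr.subset (mem_range_self t)).1
  have hk' : IsEmbedding (fun t => (⟨k t, hkA t⟩ : A)) := hk.codRestrict A hkA
  have hrange : range (fun t => (⟨k t, hkA t⟩ : A)) = Subtype.val ⁻¹' V := by
    ext y
    constructor
    · rintro ⟨t, rfl⟩
      exact (hr.subset (mem_range_self t)).2
    · intro hy
      obtain ⟨t, ht⟩ := hr.superset ⟨y.2, hy⟩
      exact ⟨t, Subtype.ext ht⟩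
  refine ⟨range (fun t => (⟨k t, hkA t⟩ : A)), ?_, ?_, ⟨hk'.toHomeomorph.symm⟩⟩
  · rw [hrange]; exact hV.preimage continuous_subtype_val
  · rw [hrange]; exact hx

lemma exists_small_emb {M : Type*} [TopologicalSpace M] (e : OpenPartialHomeomorph M ℂ) {x : M}
    (hx : x ∈ e.source) {O : Set M} (hO : O ∈ 𝓝 x) :
    ∃ j : ℂ → M, IsOpenEmbedding j ∧ j 0 = x ∧ range j ⊆ O ∩ e.source ∧
      ∀ z, ∃ t : ℝ, 0 < t ∧ e (j z) = e x + t * z := by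
  have h1 : e.symm ⁻¹' O ∩ e.target ∈ 𝓝 (e x) := by
    refine inter_mem ?_ (e.open_target.mem_nhds (e.map_source hx))
    apply (e.continuousAt_symm (e.map_source hx)).preimage_mem_nhds
    rwa [e.left_inv hx]
  obtain ⟨ε, hε, hball⟩ := Metric.mem_nhds_iff.1 h1
  set b : OpenPartialHomeomorph ℂ ℂ := OpenPartialHomeomorph.univBall (e x) ε with hb
  have hbt : b.target = ball (e x) ε := OpenPartialHomeomorph.univBall_target _ hε
  have hbs : b.source = univ := OpenPartialHomeomorph.univBall_source _ _
  have hbm : ∀ z, b z ∈ ball (e x) ε := fun z => hbt ▸ b.map_source (by rw [hbs]; trivial)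
  have hsrc : (b.trans e.symm).source = univ := by
    rw [b.trans_source, hbs, univ_inter, eq_univ_iff_forall]
    exact fun z => (hball (hbm z)).2
  refine ⟨b.trans e.symm, (b.trans e.symm).isOpenEmbedding hsrc, ?_, ?_, ?_⟩
  · change e.symm (b 0) = x
    rw [hb, OpenPartialHomeomorph.univBall_apply_zero, e.left_inv hx]
  · rintro _ ⟨z, rfl⟩
    exact ⟨(hball (hbm z)).1, e.map_target (hball (hbm z)).2⟩
  · intro z
    refine ⟨ε * (√(1 + ‖z‖ ^ 2))⁻¹, by positivity, ?_⟩
    change e (e.symm (b z)) = _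
    rw [e.right_inv (hball (hbm z)).2, hb, OpenPartialHomeomorph.univBall, dif_pos hε]
    change ε • ((√(1 + ‖z‖ ^ 2))⁻¹ • z) + e x = _
    rw [Complex.real_smul, Complex.real_smul]
    push_cast
    ring

lemma good_sub {M : Type*} [TopologicalSpace M] [T2Space M]
    {i : M → ℂ → M} (hi : ∀ x, IsOpenEmbedding (i x)) (hi0 : ∀ x, i x 0 = x) {A : Set M} (hA : Good A)
    (x : A) : ∃ U : Set A, IsOpen U ∧ x ∈ U ∧
    (Nonempty (U ≃ₜ (ℝ × ℝ)) ∨ Nonempty (U ≃ₜ (ℝ × {y : ℝ // 0 ≤ y}))) := by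
  by_cases hx : (x : M) ∈ interior A
  · have hxs : (x : M) ∈ ((hi x).toOpenPartialHomeomorph (i x)).symm.source := by
      have : (x : M) ∈ range (i x) := ⟨0, hi0 x⟩
      simpa using this
    obtain ⟨j, hj, hj0, hjr, -⟩ := exists_small_emb _ hxs (isOpen_interior.mem_nhds hx)
    have hjA : range j ⊆ A := hjr.trans (inter_subset_left.trans interior_subset)
    obtain ⟨U, h1, h2, h3⟩ := local_model (A := A) (x := x)
      (k := j ∘ Complex.equivRealProdCLM.symm.toHomeomorph)
      (hj.isEmbedding.comp (Homeomorph.isEmbedding _)) hj.isOpen_range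
      (by
        rw [range_comp, Homeomorph.range_coe, image_univ, inter_eq_right.2 hjA]) ⟨0, hj0⟩
    exact ⟨U, h1, h2, Or.inl h3⟩
  · have hxf : (x : M) ∈ frontier A := by
      rw [hA.1.isClosed.frontier_eq]; exact ⟨x.2, hx⟩
    obtain ⟨e, hxe, he⟩ := hA.2.2 x hxf
    have him := FlatAt.im_eq_zero hxe he hxf
    obtain ⟨j, hj, hj0, hjr, hjt⟩ := exists_small_emb e hxe univ_mem
    have hjA : ∀ z, j z ∈ A ↔ z.im ≤ 0 := by
      intro z
      obtain ⟨t, ht, h⟩ := hjt z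
      rw [he _ (hjr (mem_range_self z)).2, h]
      simp [him, ht]
      constructor <;> intro h <;> nlinarith
    set q : ℝ × {y : ℝ // 0 ≤ y} → ℂ := fun p => Complex.equivRealProdCLM.symm (p.1, -(p.2 : ℝ)) with hq
    have hqe : IsEmbedding q := by
      have h1 : IsEmbedding (fun y : {y : ℝ // 0 ≤ y} => -(y : ℝ)) :=
        (Homeomorph.neg ℝ).isEmbedding.comp IsEmbedding.subtypeVal
      exact Complex.equivRealProdCLM.symm.toHomeomorph.isEmbedding.comp (IsEmbedding.id.prodMap h1)
    obtain ⟨U, h1, h2, h3⟩ := local_model (A := A) (x := x) (k := j ∘ q)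
      (hj.isEmbedding.comp hqe) hj.isOpen_range
      (by
        ext y
        constructor
        · rintro ⟨p, rfl⟩
          refine ⟨(hjA _).2 ?_, mem_range_self _⟩
          have := p.2.2
          simpa [hq] using this
        · rintro ⟨hy, z, rfl⟩
          have hz := (hjA z).1 hy
          refine ⟨(z.re, ⟨-z.im, by linarith⟩), ?_⟩
          change j _ = j z
          congr 1
          apply Complex.ext <;> simp [hq]) ⟨0, hj0⟩
    exact ⟨U, h1, h2, Or.inr h3⟩

end OSCE
end

variable {M : Type*} [TopologicalSpace M]

/-- A subset `S` of a topological space is a (topological) subsurface with boundary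
if every point of `S` has an open neighborhood in `S` homeomorphic either to ℝ²
or to the closed half-plane `ℝ × [0,∞)`. -/
def IsSubsurfaceWithBoundary (S : Set M) : Prop :=
  ∀ x : S, ∃ U : Set S, IsOpen U ∧ x ∈ U ∧
    (Nonempty (U ≃ₜ (ℝ × ℝ)) ∨ Nonempty (U ≃ₜ (ℝ × {y : ℝ // 0 ≤ y})))

/-- Every connected, noncompact, second-countable (Hausdorff) topological surface
without boundary admits a compact exhaustion by connected compact
subsurfaces-with-boundary: compact connected subsurfaces `K 0 ⊆ K 1 ⊆ ⋯` with
`K n ⊆ int (K (n+1))` for all `n` and `⋃ n, K n = M`. -/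
theorem open_surface_compact_exhaustion
    (M : Type*) [TopologicalSpace M] [T2Space M] [SecondCountableTopology M]
    [ConnectedSpace M] (hnc : ¬ CompactSpace M)
    (hsurf : ∀ x : M, ∃ U : Set M, IsOpen U ∧ x ∈ U ∧ Nonempty (U ≃ₜ (ℝ × ℝ))) :
    ∃ K : ℕ → Set M,
      (∀ n, IsCompact (K n) ∧ IsConnected (K n) ∧ IsSubsurfaceWithBoundary (K n)) ∧
      (∀ n, K n ⊆ interior (K (n + 1))) ∧
      (⋃ n, K n) = Set.univ := by
  choose i hi hi0 using OSCE.exists_emb hsurf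
  obtain ⟨K, h1, h2, h3⟩ := OSCE.good_exhaust hi hi0
  exact ⟨K, fun n => ⟨(h1 n).1, (h1 n).2.1, fun x => OSCE.good_sub hi hi0 (h1 n) x⟩, h2, h3⟩
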